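/- Let X be a Peano space containing infinitely many non-contractible maximal cyclic subsets. Then X is not locally contractible. -/

import Mathlib

open Metric Set

/-- A Jordan curve: a subset homeomorphic to the circle. -/
def IsJordanCurve {X : Type} [TopologicalSpace X] (J : Set X) : Prop :=
  Nonempty (AddCircle (1 : ℝ) ≃ₜ J)

/-- A set is cyclicly connected if every pair of its points lies on a Jordan curve in it. -/
def CyclicallyConnected {X : Type} [TopologicalSpace X] (C : Set X) : Prop :=
  ∀ x ∈ C, ∀ y ∈ C, ∃ J : Set X, J ⊆ C ∧ IsJordanCurve J ∧ x ∈ J ∧ y ∈ J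

/-- A maximal cyclic subset: non-degenerate, cyclicly connected, and not a proper subset
of any cyclicly connected subset. -/
def MaximalCyclic {X : Type} [TopologicalSpace X] (T : Set X) : Prop :=
  ¬ T.Subsingleton ∧ CyclicallyConnected T ∧
    ∀ C : Set X, CyclicallyConnected C → T ⊆ C → C = T

/-- Locally contractible: every point has arbitrarily small contractible open
neighborhoods. -/
def LocallyContractible (X : Type) [TopologicalSpace X] : Prop :=
  ∀ x : X, ∀ U ∈ nhds x, ∃ V ∈ nhds x, V ⊆ U ∧ IsOpen V ∧ ContractibleSpace ↥V

/-!
A maximal cyclic set contains every arc joining two of its points, and two distinct maximal cyclic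
sets share at most one point. A locally contractible space is locally path connected, and then the
closure of a path component of the complement of a maximal cyclic set meets the set in at most one
point.

A maximal cyclic set `T` is closed. If `p ∉ T` were a limit point, an arc `γ` would lead to `p`
through `T`. Since `T` is not separated by a point, small arcs of `γ` can be completed to small
Jordan curves avoiding `p`, and these form a chain of cyclicly connected sets converging to `p`.
Two disjoint strands through the chain, joined at `p`, yield an arc through `p` with both ends
in `T`, whence `p ∈ T`.

Sending each complementary path component to the point of `T` in its closure now retracts `X`
onto `T`. By compactness, infinitely many maximal cyclic sets include arbitrarily small ones near
some point `x`: otherwise two of them would come close to each other at two distant places, and an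
arc of one could be rerouted along the other, producing two common points. A maximal cyclic set
inside a contractible neighbourhood of `x` is a retract of it, hence contractible.
-/

open Topology Filter

section Arcs

variable {X : Type*} [TopologicalSpace X] {A B K : Set X} {x y z : X} {γ γ₁ γ₂ : ℝ → X} {a b c : ℝ}

/-- `A` is an arc with endpoints `x` and `y`. The parameter interval may be a single point, so that
`{x}` is an arc from `x` to `x`: this spares case distinctions when arcs are cut and glued. -/
def IsArc (A : Set X) (x y : X) : Prop :=
  ∃ (γ : ℝ → X) (a b : ℝ), a ≤ b ∧ ContinuousOn γ (Icc a b) ∧ InjOn γ (Icc a b) ∧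
    γ a = x ∧ γ b = y ∧ γ '' Icc a b = A

lemma isArc_image (hab : a ≤ b) (hγ : ContinuousOn γ (Icc a b)) (hinj : InjOn γ (Icc a b)) :
    IsArc (γ '' Icc a b) (γ a) (γ b) :=
  ⟨γ, a, b, hab, hγ, hinj, rfl, rfl, rfl⟩

namespace IsArc

lemma left_mem (h : IsArc A x y) : x ∈ A := by
  obtain ⟨γ, a, b, hab, -, -, rfl, -, rfl⟩ := h
  exact mem_image_of_mem _ (left_mem_Icc.2 hab)

lemma right_mem (h : IsArc A x y) : y ∈ A := by
  obtain ⟨γ, a, b, hab, -, -, -, rfl, rfl⟩ := h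
  exact mem_image_of_mem _ (right_mem_Icc.2 hab)

lemma isCompact (h : IsArc A x y) : IsCompact A := by
  obtain ⟨γ, a, b, -, hγ, -, -, -, rfl⟩ := h
  exact isCompact_Icc.image_of_continuousOn hγ

lemma isClosed [T2Space X] (h : IsArc A x y) : IsClosed A :=
  h.isCompact.isClosed

lemma isPathConnected (h : IsArc A x y) : IsPathConnected A := by
  obtain ⟨γ, a, b, hab, hγ, -, -, -, rfl⟩ := h
  exact ((convex_Icc a b).isPathConnected (nonempty_Icc.2 hab)).image' hγ

lemma joinedIn (h : IsArc A x y) : JoinedIn A x y :=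
  h.isPathConnected.joinedIn _ h.left_mem _ h.right_mem

lemma singleton (x : X) : IsArc {x} x x :=
  ⟨fun _ => x, 0, 0, le_rfl, continuousOn_const, by simp, rfl, rfl, by simp⟩

lemma symm (h : IsArc A x y) : IsArc A y x := by
  obtain ⟨γ, a, b, hab, hγ, hinj, rfl, rfl, rfl⟩ := h
  have him : (fun t : ℝ => -t) '' Icc (-b) (-a) = Icc a b := by simp
  have hmaps := mapsTo_iff_image_subset.2 him.subset
  refine ⟨γ ∘ fun t => -t, -b, -a, neg_le_neg hab, hγ.comp continuousOn_neg hmaps,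
    hinj.comp neg_injective.injOn hmaps, by simp, by simp, ?_⟩
  rw [image_comp, him]

lemma exists_param_from (h : IsArc A x y) (a : ℝ) :
    ∃ (γ : ℝ → X) (b : ℝ), a ≤ b ∧ ContinuousOn γ (Icc a b) ∧ InjOn γ (Icc a b) ∧
      γ a = x ∧ γ b = y ∧ γ '' Icc a b = A := by
  obtain ⟨γ, c, b, hcb, hγ, hinj, rfl, rfl, rfl⟩ := h
  have him : (fun t : ℝ => t + (c - a)) '' Icc a (b - (c - a)) = Icc c b := by
    rw [image_add_const_Icc, add_sub_cancel, sub_add_cancel]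
  have hmaps := mapsTo_iff_image_subset.2 him.subset
  refine ⟨γ ∘ fun t => t + (c - a), b - (c - a), by linarith, hγ.comp (by fun_prop) hmaps,
    hinj.comp (add_left_injective _).injOn hmaps, by simp, by simp, ?_⟩
  rw [image_comp, him]

end IsArc

lemma exists_continuousOn_glue (hab : a ≤ b) (hbc : b ≤ c)
    (h₁ : ContinuousOn γ₁ (Icc a b)) (h₂ : ContinuousOn γ₂ (Icc b c)) (h : γ₁ b = γ₂ b) :
    ∃ γ : ℝ → X, ContinuousOn γ (Icc a c) ∧ EqOn γ γ₁ (Icc a b) ∧ EqOn γ γ₂ (Icc b c) ∧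
      γ '' Icc a c = γ₁ '' Icc a b ∪ γ₂ '' Icc b c := by
  let γ : ℝ → X := fun t => if t ≤ b then γ₁ t else γ₂ t
  have eq₁ : EqOn γ γ₁ (Icc a b) := fun t ht => if_pos ht.2
  have eq₂ : EqOn γ γ₂ (Icc b c) := fun t ht => by
    rcases ht.1.eq_or_lt with rfl | hlt
    · simp [γ, h]
    · simp [γ, not_le.2 hlt]
  refine ⟨γ, ?_, eq₁, eq₂, ?_⟩ <;> rw [← Icc_union_Icc_eq_Icc hab hbc]
  · exact (h₁.congr eq₁).union_of_isClosed (h₂.congr eq₂) isClosed_Icc isClosed_Icc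
  · rw [image_union, eq₁.image_eq, eq₂.image_eq]

namespace IsArc

lemma trans (hA : IsArc A x y) (hB : IsArc B y z) (h : A ∩ B ⊆ {y}) : IsArc (A ∪ B) x z := by
  obtain ⟨γ₁, a, b, hab, hγ₁, hinj₁, rfl, rfl, rfl⟩ := hA
  obtain ⟨γ₂, c, hbc, hγ₂, hinj₂, hb, rfl, rfl⟩ := hB.exists_param_from b
  obtain ⟨γ, hγ, eq₁, eq₂, him⟩ := exists_continuousOn_glue hab hbc hγ₁ hγ₂ hb.symm
  have hcross : ∀ s ∈ Icc a b, ∀ t ∈ Icc b c, γ s = γ t → s = t := by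
    intro s hs t ht hst
    rw [eq₁ hs, eq₂ ht] at hst
    have hsb : γ₁ s = γ₁ b := h ⟨⟨s, hs, rfl⟩, t, ht, hst.symm⟩
    exact (hinj₁ hs (right_mem_Icc.2 hab) hsb).trans
      (hinj₂ (left_mem_Icc.2 hbc) ht (by rw [← hst, hsb, hb]))
  refine ⟨γ, a, c, hab.trans hbc, hγ, ?_, eq₁ (left_mem_Icc.2 hab), eq₂ (right_mem_Icc.2 hbc), him⟩
  rw [← Icc_union_Icc_eq_Icc hab hbc]
  rintro s (hs | hs) t (ht | ht) hst
  · exact eq₁.injOn_iff.2 hinj₁ hs ht hst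
  · exact hcross s hs t ht hst
  · exact (hcross t ht s hs hst.symm).symm
  · exact eq₂.injOn_iff.2 hinj₂ hs ht hst

lemma exists_first (h : IsArc A x y) (hK : IsClosed K) (hAK : (A ∩ K).Nonempty) :
    ∃ z A₁ A₂, IsArc A₁ x z ∧ IsArc A₂ z y ∧ A₁ ∪ A₂ = A ∧ A₁ ∩ A₂ = {z} ∧ A₁ ∩ K = {z} := by
  obtain ⟨γ, a, b, -, hγ, hinj, rfl, rfl, rfl⟩ := h
  have hcomp : IsCompact (Icc a b ∩ γ ⁻¹' K) :=
    isCompact_Icc.of_isClosed_subset (hγ.preimage_isClosed_of_isClosed isClosed_Icc hK)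
      inter_subset_left
  obtain ⟨_, ⟨s, hs, rfl⟩, hsK⟩ := hAK
  obtain ⟨t, ⟨ht, htK⟩, hmin⟩ := hcomp.exists_isLeast ⟨s, hs, hsK⟩
  have hsub₁ : Icc a t ⊆ Icc a b := Icc_subset_Icc_right ht.2
  have hsub₂ : Icc t b ⊆ Icc a b := Icc_subset_Icc_left ht.1
  refine ⟨γ t, γ '' Icc a t, γ '' Icc t b, isArc_image ht.1 (hγ.mono hsub₁) (hinj.mono hsub₁),
    isArc_image ht.2 (hγ.mono hsub₂) (hinj.mono hsub₂), ?_, ?_, ?_⟩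
  · rw [← image_union, Icc_union_Icc_eq_Icc ht.1 ht.2]
  · rw [← hinj.image_inter hsub₁ hsub₂, Icc_inter_Icc_eq_singleton ht.1 ht.2, image_singleton]
  · refine Subset.antisymm ?_ (singleton_subset_iff.2 ⟨⟨t, right_mem_Icc.2 ht.1, rfl⟩, htK⟩)
    rintro _ ⟨⟨u, hu, rfl⟩, huK⟩
    exact congrArg γ (hu.2.antisymm (hmin ⟨hsub₁ hu, huK⟩))

lemma split [T1Space X] (h : IsArc A x y) (hz : z ∈ A) :
    ∃ A₁ A₂, IsArc A₁ x z ∧ IsArc A₂ z y ∧ A₁ ∪ A₂ = A ∧ A₁ ∩ A₂ = {z} := by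
  obtain ⟨w, A₁, A₂, hA₁, hA₂, hunion, hinter, hw⟩ :=
    h.exists_first (isClosed_singleton (x := z)) ⟨z, hz, rfl⟩
  obtain rfl : w = z := (hw ▸ mem_singleton w : w ∈ A₁ ∩ {z}).2
  exact ⟨A₁, A₂, hA₁, hA₂, hunion, hinter⟩

end IsArc

end Arcs

section JordanCurves

variable {X : Type} [TopologicalSpace X] {A B J : Set X} {x y : X} {γ : ℝ → X} {a b : ℝ}

lemma IsJordanCurve.isCompact (h : IsJordanCurve J) : IsCompact J := by
  obtain ⟨e⟩ := h
  exact isCompact_iff_compactSpace.2 e.compactSpace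

lemma IsJordanCurve.exists_loop (h : IsJordanCurve J) (hx : x ∈ J) :
    ∃ γ : ℝ → X, Continuous γ ∧ γ 0 = x ∧ γ 1 = x ∧ InjOn γ (Ico 0 1) ∧ InjOn γ (Ioc 0 1) ∧
      γ '' Icc 0 1 = J := by
  obtain ⟨e⟩ := h
  let g : AddCircle (1 : ℝ) → X := fun θ => e (θ + e.symm ⟨x, hx⟩)
  have hg : Function.Injective g :=
    Subtype.val_injective.comp (e.injective.comp (add_left_injective _))
  refine ⟨fun t => g t, by fun_prop, by simp [g], by simp [g, AddCircle.coe_period], ?_, ?_, ?_⟩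
  · exact fun s hs t ht hst => (AddCircle.coe_eq_coe_iff_of_mem_Ico (a := 0)
      (by simpa using hs) (by simpa using ht)).1 (hg hst)
  · exact fun s hs t ht hst => (AddCircle.coe_eq_coe_iff_of_mem_Ioc (a := 0)
      (by simpa using hs) (by simpa using ht)).1 (hg hst)
  · have hcover := AddCircle.coe_image_Icc_eq (1 : ℝ) 0
    rw [zero_add] at hcover
    rw [← image_image g, hcover, image_univ]
    refine (range_subset_iff.2 fun θ => (e _).2).antisymm fun z hz => ?_
    exact ⟨e.symm ⟨z, hz⟩ - e.symm ⟨x, hx⟩, by simp⟩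

lemma IsJordanCurve.exists_arcs (h : IsJordanCurve J) (hx : x ∈ J) (hy : y ∈ J) (hxy : x ≠ y) :
    ∃ A B, IsArc A x y ∧ IsArc B x y ∧ A ∪ B = J ∧ A ∩ B = {x, y} := by
  obtain ⟨γ, hγ, h0, h1, hIco, hIoc, rfl⟩ := h.exists_loop hx
  obtain ⟨t, ht, rfl⟩ := hy
  have ht0 : 0 < t := ht.1.lt_of_ne (by rintro rfl; exact hxy h0.symm)
  have ht1 : t < 1 := ht.2.lt_of_ne (by rintro rfl; exact hxy h1.symm)
  have hA := isArc_image ht.1 hγ.continuousOn (hIco.mono (Icc_subset_Ico_right ht1))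
  have hB := isArc_image ht.2 hγ.continuousOn (hIoc.mono (Icc_subset_Ioc ht0 le_rfl))
  have hxA := hA.left_mem
  have hxB := hB.right_mem
  rw [h0] at hA hxA
  rw [h1] at hB hxB
  refine ⟨_, _, hA, hB.symm, by rw [← image_union, Icc_union_Icc_eq_Icc ht.1 ht.2],
    Subset.antisymm ?_ (pair_subset ⟨hxA, hxB⟩ ⟨hA.right_mem, hB.left_mem⟩)⟩
  rintro _ ⟨⟨u, hu, rfl⟩, v, hv, hvu⟩
  rcases hv.2.eq_or_lt with rfl | hv1
  · exact Or.inl (hvu.symm.trans h1)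
  · obtain rfl := hIco ⟨ht.1.trans hv.1, hv1⟩ ⟨hu.1, hu.2.trans_lt ht1⟩ hvu
    exact Or.inr (congrArg γ (hu.2.antisymm hv.1))

lemma isJordanCurve_image_Icc [T2Space X] (hab : a < b) (hγ : ContinuousOn γ (Icc a b))
    (hloop : γ a = γ b) (hinj : InjOn γ (Ico a b)) : IsJordanCurve (γ '' Icc a b) := by
  obtain ⟨p, rfl⟩ : ∃ p, b = a + p := ⟨b - a, by ring⟩
  have : Fact (0 < p) := ⟨by linarith⟩
  let f : AddCircle p → X := AddCircle.liftIco p a γ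
  have hf : Continuous f := AddCircle.liftIco_continuous hloop hγ
  have hval : ∀ t ∈ Ico a (a + p), f t = γ t := fun t ht => AddCircle.liftIco_coe_apply ht
  have hcover : ∀ θ : AddCircle p, ∃ t ∈ Ico a (a + p), (t : AddCircle p) = θ := fun θ => by
    have := mem_univ θ
    rwa [← AddCircle.coe_image_Ico_eq p a] at this
  have hfinj : Function.Injective f := by
    intro θ η h
    obtain ⟨s, hs, rfl⟩ := hcover θ
    obtain ⟨t, ht, rfl⟩ := hcover η
    rw [hval s hs, hval t ht] at h
    rw [hinj hs ht h]
  have hrange : range f = γ '' Icc a (a + p) := by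
    refine Subset.antisymm (range_subset_iff.2 fun θ => ?_) ?_
    · obtain ⟨s, hs, rfl⟩ := hcover θ
      exact ⟨s, Ico_subset_Icc_self hs, (hval s hs).symm⟩
    · rintro _ ⟨s, hs, rfl⟩
      rcases hs.2.eq_or_lt with rfl | hlt
      · exact ⟨a, by rw [hval a ⟨le_rfl, hab⟩, hloop]⟩
      · exact ⟨s, hval s ⟨hs.1, hlt⟩⟩
  rw [← hrange]
  exact ⟨(AddCircle.homeomorphAddCircle 1 p one_ne_zero (by linarith)).trans
    (hf.isClosedEmbedding hfinj).isEmbedding.toHomeomorph⟩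

lemma IsArc.isJordanCurve_union [T2Space X] (hA : IsArc A x y) (hB : IsArc B x y) (hxy : x ≠ y)
    (h : A ∩ B ⊆ {x, y}) : IsJordanCurve (A ∪ B) := by
  obtain ⟨γ₁, a, b, hab, hγ₁, hinj₁, rfl, rfl, rfl⟩ := hA
  obtain ⟨γ₂, c, hbc, hγ₂, hinj₂, hb, hc, rfl⟩ := hB.symm.exists_param_from b
  obtain ⟨γ, hγ, eq₁, eq₂, him⟩ := exists_continuousOn_glue hab hbc hγ₁ hγ₂ hb.symm
  have hlt : a < b := hab.lt_of_ne (by rintro rfl; exact hxy rfl)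
  have hcross : ∀ s ∈ Icc a b, ∀ t ∈ Icc b c, t < c → γ s = γ t → s = t := by
    intro s hs t ht htc hst
    rw [eq₁ hs, eq₂ ht] at hst
    rcases h ⟨⟨s, hs, rfl⟩, t, ht, hst.symm⟩ with hsa | hsb
    · exact absurd (hinj₂ ht (right_mem_Icc.2 hbc) (by rw [← hst, hsa, hc])) htc.ne
    · exact (hinj₁ hs (right_mem_Icc.2 hab) hsb).trans
        (hinj₂ (left_mem_Icc.2 hbc) ht (by rw [← hst, hsb, hb]))
  rw [← him]
  refine isJordanCurve_image_Icc (hlt.trans_le hbc) hγ ?_ fun s hs t ht hst => ?_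
  · rw [eq₁ (left_mem_Icc.2 hab), eq₂ (right_mem_Icc.2 hbc), hc]
  rcases le_total s b with hsb | hsb <;> rcases le_total t b with htb | htb
  · exact eq₁.injOn_iff.2 hinj₁ ⟨hs.1, hsb⟩ ⟨ht.1, htb⟩ hst
  · exact hcross s ⟨hs.1, hsb⟩ t ⟨htb, ht.2.le⟩ ht.2 hst
  · exact (hcross t ⟨ht.1, htb⟩ s ⟨hsb, hs.2.le⟩ hs.2 hst.symm).symm
  · exact eq₂.injOn_iff.2 hinj₂ ⟨hsb, hs.2.le⟩ ⟨htb, ht.2.le⟩ hst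

end JordanCurves

section PathsToArcs

/-- The largest point of `K` that is at most `t`. It is only meaningful when `K` is closed and has a
point in `Iic t`. -/
noncomputable def lastBefore (K : Set ℝ) (t : ℝ) : ℝ :=
  sSup (K ∩ Iic t)

/-- The smallest point of `K` that is at least `t`. It is only meaningful when `K` is closed and has
a point in `Ici t`. -/
noncomputable def firstAfter (K : Set ℝ) (t : ℝ) : ℝ :=
  sInf (K ∩ Ici t)

section Order

variable {K : Set ℝ} {s t : ℝ}

lemma le_lastBefore (hs : s ∈ K) (hst : s ≤ t) : s ≤ lastBefore K t :=
  le_csSup (bddAbove_Iic.mono inter_subset_right) ⟨hs, hst⟩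

lemma firstAfter_le (hs : s ∈ K) (hts : t ≤ s) : firstAfter K t ≤ s :=
  csInf_le (bddBelow_Ici.mono inter_subset_right) ⟨hs, hts⟩

lemma lastBefore_mem_inter (hK : IsClosed K) (hs : s ∈ K) (hst : s ≤ t) :
    lastBefore K t ∈ K ∩ Iic t :=
  (hK.inter isClosed_Iic).csSup_mem ⟨s, hs, hst⟩ (bddAbove_Iic.mono inter_subset_right)

lemma firstAfter_mem_inter (hK : IsClosed K) (hs : s ∈ K) (hts : t ≤ s) :
    firstAfter K t ∈ K ∩ Ici t :=
  (hK.inter isClosed_Ici).csInf_mem ⟨s, hs, hts⟩ (bddBelow_Ici.mono inter_subset_right)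

end Order

/-- A closed subset of `[0, 1]` containing the endpoints such that `γ` takes the same value at the
two ends of every gap. Collapsing the gaps then shortcuts `γ`; a minimal gap set leaves no further
shortcut. -/
structure IsGapSet {X : Type*} (γ : ℝ → X) (K : Set ℝ) : Prop where
  isClosed : IsClosed K
  subset_Icc : K ⊆ Icc 0 1
  zero_mem : 0 ∈ K
  one_mem : 1 ∈ K
  eq_of_gap : ∀ s ∈ K, ∀ t ∈ K, s < t → Disjoint (Ioo s t) K → γ s = γ t

namespace IsGapSet

variable {X : Type*} {γ : ℝ → X} {K : Set ℝ} {s t : ℝ}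

lemma unitInterval (γ : ℝ → X) : IsGapSet γ (Icc 0 1) where
  isClosed := isClosed_Icc
  subset_Icc := Subset.rfl
  zero_mem := by simp
  one_mem := by simp
  eq_of_gap s hs t ht hst hgap := by
    obtain ⟨u, hu⟩ := exists_between hst
    exact absurd ⟨hs.1.trans hu.1.le, hu.2.le.trans ht.2⟩ (disjoint_left.1 hgap hu)

lemma lastBefore_mem_inter (hK : IsGapSet γ K) (ht : 0 ≤ t) : lastBefore K t ∈ K ∩ Iic t :=
  _root_.lastBefore_mem_inter hK.isClosed hK.zero_mem ht

lemma firstAfter_mem_inter (hK : IsGapSet γ K) (ht : t ≤ 1) : firstAfter K t ∈ K ∩ Ici t :=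
  _root_.firstAfter_mem_inter hK.isClosed hK.one_mem ht

lemma apply_lastBefore_eq (hK : IsGapSet γ K) (ht : t ∈ Icc 0 1) :
    γ (lastBefore K t) = γ (firstAfter K t) := by
  obtain ⟨hσ, hσt⟩ := hK.lastBefore_mem_inter ht.1
  obtain ⟨hτ, htτ⟩ := hK.firstAfter_mem_inter ht.2
  rcases (hσt.trans htτ : lastBefore K t ≤ firstAfter K t).eq_or_lt with heq | hlt
  · rw [heq]
  refine hK.eq_of_gap _ hσ _ hτ hlt (disjoint_left.2 fun u hu huK => ?_)
  rcases le_total u t with hut | htu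
  · exact hu.1.not_ge (le_lastBefore huK hut)
  · exact hu.2.not_ge (firstAfter_le huK htu)

lemma exists_eq_across (hK : IsGapSet γ K) {a b : ℝ} (hs : s ∈ K) (ht : t ∈ K) (hsa : s ≤ a)
    (hab : a ≤ b) (hbt : b ≤ t) (hdisj : Disjoint (Icc a b) K) :
    ∃ u ∈ Ico s a, ∃ v ∈ Ioc b t, γ u = γ v := by
  obtain ⟨hσ, hσa⟩ := _root_.lastBefore_mem_inter hK.isClosed hs hsa
  obtain ⟨hτ, haτ⟩ := _root_.firstAfter_mem_inter hK.isClosed ht (hab.trans hbt)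
  refine ⟨_, ⟨le_lastBefore hs hsa, lt_of_not_ge fun h => ?_⟩, _,
    ⟨lt_of_not_ge fun h => ?_, firstAfter_le ht (hab.trans hbt)⟩, hK.apply_lastBefore_eq
    ⟨(hK.subset_Icc hs).1.trans hsa, (hab.trans hbt).trans (hK.subset_Icc ht).2⟩⟩
  · exact disjoint_left.1 hdisj ⟨h, hσa.trans hab⟩ hσ
  · exact disjoint_left.1 hdisj ⟨haτ, h⟩ hτ

lemma exists_disjoint_Icc {c : Set (Set ℝ)} (hc : ∀ K ∈ c, IsGapSet γ K)
    (hchain : IsChain (· ⊆ ·) c) (hne : c.Nonempty) {a b : ℝ}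
    (h : Disjoint (Icc a b) (⋂₀ c)) : ∃ K ∈ c, Disjoint (Icc a b) K := by
  have : Nonempty c := hne.to_subtype
  rw [disjoint_iff_inter_eq_empty, sInter_eq_iInter] at h
  obtain ⟨K, hK⟩ := isCompact_Icc.elim_directed_family_closed _
    (fun K : c => (hc K K.2).isClosed) h (IsChain.directed (f := id) hchain.symm)
  exact ⟨K, K.2, disjoint_iff_inter_eq_empty.2 hK⟩

lemma sInter [TopologicalSpace X] [T2Space X] (hγ : Continuous γ) {c : Set (Set ℝ)}
    (hc : ∀ K ∈ c, IsGapSet γ K) (hchain : IsChain (· ⊆ ·) c) (hne : c.Nonempty) :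
    IsGapSet γ (⋂₀ c) where
  isClosed := isClosed_sInter fun K hK => (hc K hK).isClosed
  subset_Icc := (sInter_subset_of_mem hne.some_mem).trans (hc _ hne.some_mem).subset_Icc
  zero_mem K hK := (hc K hK).zero_mem
  one_mem K hK := (hc K hK).one_mem
  eq_of_gap s hs t ht hst hgap := by
    have hlim : ∃ᶠ p in 𝓝 s ×ˢ 𝓝 t, γ p.1 = γ p.2 := by
      refine ((nhds_basis_Ioo s).prod (nhds_basis_Ioo t)).frequently_iff.2 ?_
      rintro ⟨⟨s₁, s₂⟩, ⟨t₁, t₂⟩⟩ ⟨⟨hs₁, hs₂⟩, ⟨ht₁, ht₂⟩⟩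
      obtain ⟨a, hsa, ha⟩ := exists_between (lt_min hst hs₂)
      obtain ⟨b, hb, hbt⟩ := exists_between (max_lt (ha.trans_le (min_le_left _ _)) ht₁)
      have hab : a < b := (le_max_left _ _).trans_lt hb
      obtain ⟨K, hK, hdisj⟩ := exists_disjoint_Icc hc hchain hne
        (hgap.mono_left (Icc_subset_Ioo hsa hbt))
      obtain ⟨u, hu, v, hv, huv⟩ := (hc K hK).exists_eq_across (hs K hK) (ht K hK) hsa.le hab.le
        hbt.le hdisj
      exact ⟨(u, v), ⟨⟨hs₁.trans_le hu.1, hu.2.trans (ha.trans_le (min_le_right _ _))⟩,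
        ((le_max_right _ _).trans_lt hb).trans hv.1, hv.2.trans_lt ht₂⟩, huv⟩
    exact tendsto_nhds_unique_of_frequently_eq ((hγ.tendsto s).comp tendsto_fst)
      ((hγ.tendsto t).comp tendsto_snd) hlim

lemma exists_minimal [TopologicalSpace X] [T2Space X] (hγ : Continuous γ) :
    ∃ K, Minimal (IsGapSet γ) K := by
  refine zorn_superset {K | IsGapSet γ K} fun c hc hchain => ?_
  rcases c.eq_empty_or_nonempty with rfl | hne
  · exact ⟨_, unitInterval γ, by simp⟩
  · exact ⟨_, sInter hγ hc hchain hne, fun K hK => sInter_subset_of_mem hK⟩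

lemma diff_Ioo (hK : IsGapSet γ K) (hs : s ∈ K) (ht : t ∈ K) (heq : γ s = γ t) :
    IsGapSet γ (K \ Ioo s t) where
  isClosed := hK.isClosed.sdiff isOpen_Ioo
  subset_Icc := sdiff_subset.trans hK.subset_Icc
  zero_mem := ⟨hK.zero_mem, fun h => h.1.not_ge (hK.subset_Icc hs).1⟩
  one_mem := ⟨hK.one_mem, fun h => h.2.not_ge (hK.subset_Icc ht).2⟩
  eq_of_gap u hu v hv huv hgap := by
    by_cases hold : Disjoint (Ioo u v) K
    · exact hK.eq_of_gap u hu.1 v hv.1 huv hold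
    obtain ⟨k, hk, hkK⟩ := not_disjoint_iff.1 hold
    have hkst : k ∈ Ioo s t := by
      by_contra hk'
      exact disjoint_left.1 hgap hk ⟨hkK, hk'⟩
    have hsu : s ≤ u := by
      by_contra! hus
      exact disjoint_left.1 hgap ⟨hus, hkst.1.trans hk.2⟩ ⟨hs, fun h => h.1.false⟩
    have hvt : v ≤ t := by
      by_contra! htv
      exact disjoint_left.1 hgap ⟨hk.1.trans hkst.2, htv⟩ ⟨ht, fun h => h.2.false⟩
    have hus : u ≤ s := by
      by_contra! h
      exact hu.2 ⟨h, hk.1.trans hkst.2⟩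
    have htv : t ≤ v := by
      by_contra! h
      exact hv.2 ⟨hkst.1.trans hk.2, h⟩
    rwa [hus.antisymm hsu, hvt.antisymm htv]

lemma disjoint_Ioo_of_minimal (hK : Minimal (IsGapSet γ) K) (hs : s ∈ K) (ht : t ∈ K)
    (heq : γ s = γ t) : Disjoint (Ioo s t) K :=
  disjoint_right.2 fun _ hu => (hK.le_of_le (hK.prop.diff_Ioo hs ht heq) sdiff_subset hu).2

lemma apply_lastBefore_eq_or (hK : IsGapSet γ K) (hs : 0 ≤ s) (hst : s ≤ t) (ht : t ≤ 1) :
    γ (lastBefore K s) = γ (lastBefore K t) ∨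
      ∃ u ∈ Icc s t, ∃ v ∈ Icc s t, γ (lastBefore K s) = γ u ∧ γ (lastBefore K t) = γ v := by
  obtain ⟨hσK, hσs⟩ := hK.lastBefore_mem_inter hs
  obtain ⟨hσK', hσt⟩ := hK.lastBefore_mem_inter (hs.trans hst)
  rcases le_total s (lastBefore K t) with h | h
  · exact Or.inr ⟨firstAfter K s, ⟨(hK.firstAfter_mem_inter (hst.trans ht)).2,
      (firstAfter_le hσK' h).trans hσt⟩, lastBefore K t, ⟨h, hσt⟩,
      hK.apply_lastBefore_eq ⟨hs, hst.trans ht⟩, rfl⟩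
  · exact Or.inl (congrArg γ
      ((le_lastBefore hσK (hσs.trans hst)).antisymm (le_lastBefore hσK' h)))

lemma continuousOn_lastBefore [PseudoMetricSpace X] (hγ : Continuous γ) (hK : IsGapSet γ K) :
    ContinuousOn (γ ∘ lastBefore K) (Icc 0 1) := by
  refine Metric.continuousOn_iff.2 fun t ht ε hε => ?_
  obtain ⟨δ, hδ, hclose⟩ := Metric.continuous_iff.1 hγ t (ε / 2) (half_pos hε)
  refine ⟨δ, hδ, fun s hs hst => ?_⟩
  have hbound : γ (lastBefore K s) = γ (lastBefore K t) ∨ ∃ u ∈ uIcc t s, ∃ v ∈ uIcc t s,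
      γ (lastBefore K s) = γ u ∧ γ (lastBefore K t) = γ v := by
    rcases le_total s t with h | h
    · rw [uIcc_of_ge h]
      exact hK.apply_lastBefore_eq_or hs.1 h ht.2
    · rw [uIcc_of_le h]
      exact (hK.apply_lastBefore_eq_or ht.1 h hs.2).imp Eq.symm
        fun ⟨u, hu, v, hv, hut, hvs⟩ => ⟨v, hv, u, hu, hvs, hut⟩
  simp only [Function.comp_apply]
  rcases hbound with heq | ⟨u, hu, v, hv, hus, hvt⟩
  · rwa [heq, dist_self]
  · have hclose' : ∀ w ∈ uIcc t s, dist (γ w) (γ t) < ε / 2 := fun w hw =>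
      hclose w (by
        rw [dist_comm] at hst ⊢
        exact (Real.dist_left_le_of_mem_uIcc hw).trans_lt hst)
    rw [hus, hvt]
    exact (dist_triangle_right _ _ _).trans_lt
      ((add_lt_add (hclose' u hu) (hclose' v hv)).trans_eq (add_halves ε))

end IsGapSet

lemma exists_ordConnected_fibres {X : Type*} [MetricSpace X] {γ : ℝ → X} (hγ : Continuous γ) :
    ∃ f : ℝ → X, Continuous f ∧ f 0 = γ 0 ∧ f 1 = γ 1 ∧ f '' Icc 0 1 ⊆ γ '' Icc 0 1 ∧
      ∀ x, (f ⁻¹' {x}).OrdConnected := by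
  obtain ⟨K, hKmin⟩ := IsGapSet.exists_minimal hγ
  have hK := hKmin.prop
  have hfix : ∀ t ∈ K, lastBefore K t = t := fun t ht =>
    (hK.lastBefore_mem_inter (hK.subset_Icc ht).1).2.antisymm (le_lastBefore ht le_rfl)
  let g : Icc (0 : ℝ) 1 → X := (Icc 0 1).domRestrict (γ ∘ lastBefore K)
  have hg : ∀ x, (g ⁻¹' {x}).OrdConnected := by
    refine fun x => ⟨fun s hs t ht u hu => ?_⟩
    obtain ⟨hσs, hs'⟩ := hK.lastBefore_mem_inter s.2.1
    obtain ⟨hσt, -⟩ := hK.lastBefore_mem_inter t.2.1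
    obtain ⟨hσu, hu'⟩ := hK.lastBefore_mem_inter u.2.1
    rcases (le_lastBefore hσs (hs'.trans hu.1)).eq_or_lt with h | hsu
    · exact (congrArg γ h.symm).trans hs
    rcases (le_lastBefore hσu (hu'.trans hu.2)).eq_or_lt with h | hut
    · exact (congrArg γ h).trans ht
    exact absurd hσu (disjoint_left.1
      (IsGapSet.disjoint_Ioo_of_minimal hKmin hσs hσt (hs.trans ht.symm)) ⟨hsu, hut⟩)
  refine ⟨IccExtend zero_le_one g, (hK.continuousOn_lastBefore hγ).domRestrict.Icc_extend', ?_,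
    ?_, ?_, fun x => (hg x).preimage_mono (monotone_projIcc _)⟩
  · exact (IccExtend_left ..).trans (congrArg γ (hfix 0 hK.zero_mem))
  · exact (IccExtend_right ..).trans (congrArg γ (hfix 1 hK.one_mem))
  · rintro _ ⟨t, ht, rfl⟩
    exact ⟨_, hK.subset_Icc (hK.lastBefore_mem_inter ht.1).1, (IccExtend_of_mem _ g ht).symm⟩

/-- The maximum of `g` over the segment from `0` to `t`. The segment is parametrized by `[0, 1]`, so
that continuity in `t` is continuity of a supremum over a fixed compact set. -/
noncomputable def runningMax (g : ℝ → ℝ) (t : ℝ) : ℝ :=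
  sSup ((fun s => g (s * t)) '' Icc 0 1)

section RunningMax

variable {g : ℝ → ℝ} {s t c : ℝ}

lemma continuous_runningMax (hg : Continuous g) : Continuous (runningMax g) :=
  isCompact_Icc.continuous_sSup (f := fun t s => g (s * t)) (by fun_prop)

lemma le_runningMax (hg : Continuous g) (hs : s ∈ Icc 0 t) : g s ≤ runningMax g t := by
  refine le_csSup (isCompact_Icc.image (by fun_prop)).bddAbove ?_
  rcases (hs.1.trans hs.2).eq_or_lt with rfl | ht
  · exact ⟨0, by simp, by simp [hs.2.antisymm hs.1]⟩
  · exact ⟨s / t, ⟨div_nonneg hs.1 ht.le, (div_le_one ht).2 hs.2⟩, by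
      simp only [div_mul_cancel₀ _ ht.ne']⟩

lemma runningMax_le (ht : 0 ≤ t) (h : ∀ s ∈ Icc 0 t, g s ≤ c) : runningMax g t ≤ c := by
  refine csSup_le (Nonempty.image _ ⟨0, by simp⟩) ?_
  rintro _ ⟨s, hs, rfl⟩
  exact h _ ⟨mul_nonneg hs.1 ht, mul_le_of_le_one_left ht hs.2⟩

lemma runningMax_mono (hg : Continuous g) (hs : 0 ≤ s) (hst : s ≤ t) :
    runningMax g s ≤ runningMax g t :=
  runningMax_le hs fun _ hv => le_runningMax hg ⟨hv.1, hv.2.trans hst⟩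

end RunningMax

/-- The distance from `f r` reached by the curve `f` between the times `r` and `t`, truncated at
`1`; it is `0` when `t ≤ r`. -/
noncomputable def excursion {X : Type*} [MetricSpace X] (f : ℝ → X) (r : ℝ) : ℝ → ℝ :=
  runningMax fun v => min 1 (dist (f (max v r)) (f r))

section Excursion

variable {X : Type*} [MetricSpace X] {f : ℝ → X} {r s t : ℝ}

lemma continuous_excursion (hf : Continuous f) (r : ℝ) : Continuous (excursion f r) :=
  continuous_runningMax (by fun_prop)

lemma le_excursion (hf : Continuous f) (hs : s ∈ Icc 0 t) :
    min 1 (dist (f (max s r)) (f r)) ≤ excursion f r t :=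
  le_runningMax (g := fun v => min 1 (dist (f (max v r)) (f r))) (by fun_prop) hs

lemma excursion_mono (hf : Continuous f) (hs : 0 ≤ s) (hst : s ≤ t) :
    excursion f r s ≤ excursion f r t :=
  runningMax_mono (by fun_prop) hs hst

lemma excursion_nonneg (f : ℝ → X) (r t : ℝ) : 0 ≤ excursion f r t :=
  Real.sSup_nonneg (by rintro _ ⟨s, -, rfl⟩; positivity)

lemma excursion_le_one (f : ℝ → X) (r t : ℝ) : excursion f r t ≤ 1 :=
  csSup_le (Nonempty.image _ ⟨0, by simp⟩) (by rintro _ ⟨s, -, rfl⟩; exact min_le_left _ _)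

lemma excursion_eq_of_eq (hf : Continuous f) (hfib : ∀ x, (f ⁻¹' {x}).OrdConnected) (hs : 0 ≤ s)
    (hst : s ≤ t) (heq : f s = f t) : excursion f r s = excursion f r t := by
  have hconst : ∀ v ∈ Icc s t, f v = f s := fun v hv => (hfib (f s)).out rfl heq.symm hv
  refine (excursion_mono hf hs hst).antisymm (runningMax_le (hs.trans hst) fun v hv => ?_)
  have hle : ∀ u ∈ Icc 0 s, min 1 (dist (f (max u r)) (f r)) ≤ excursion f r s := fun u hu =>
    le_excursion hf hu
  rcases le_total v s with hvs | hsv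
  · exact hle v ⟨hv.1, hvs⟩
  rcases le_total r s with hrs | hsr
  · have hs' := hle s ⟨hs, le_rfl⟩
    rwa [max_eq_left hrs, ← hconst v ⟨hsv, hv.2⟩, ← max_eq_left (hrs.trans hsv)] at hs'
  · have hr : f (max v r) = f r := by
      rcases le_total v r with hvr | hrv
      · rw [max_eq_right hvr]
      · rw [max_eq_left hrv, hconst v ⟨hsv, hv.2⟩, hconst r ⟨hsr, hrv.trans hv.2⟩]
    rw [hr, dist_self, min_eq_right zero_le_one]
    exact excursion_nonneg f r s

lemma excursion_lt (hf : Continuous f) (hs : 0 ≤ s) (hr : r ∈ Ioo s t) (hne : f r ≠ f t) :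
    excursion f r s < excursion f r t := by
  have hzero : excursion f r s ≤ 0 := runningMax_le hs fun v hv => by
    simp [max_eq_right (hv.2.trans hr.1.le)]
  have hpos : 0 < min 1 (dist (f (max t r)) (f r)) := by
    rw [max_eq_left hr.2.le]
    exact lt_min zero_lt_one (dist_pos.2 hne.symm)
  exact hzero.trans_lt (hpos.trans_le (le_excursion hf ⟨hs.trans (hr.1.trans hr.2).le, le_rfl⟩))

lemma exists_continuous_eq_iff_eq (hf : Continuous f) (hfib : ∀ x, (f ⁻¹' {x}).OrdConnected) :
    ∃ φ : ℝ → ℝ, Continuous φ ∧ ∀ s ≥ 0, ∀ t ≥ s, φ s ≤ φ t ∧ (f s = f t ↔ φ s = φ t) := by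
  let q : ℕ → ℝ := TopologicalSpace.denseSeq ℝ
  let ψ : ℕ → ℝ → ℝ := fun n t => (1 / 2 : ℝ) ^ n * excursion f (q n) t
  have hψ : ∀ n t, ‖ψ n t‖ ≤ (1 / 2 : ℝ) ^ n := fun n t => by
    rw [Real.norm_of_nonneg (mul_nonneg (by positivity) (excursion_nonneg ..))]
    exact mul_le_of_le_one_right (by positivity) (excursion_le_one ..)
  have hsum : ∀ t, Summable fun n => ψ n t := fun t =>
    Summable.of_norm_bounded summable_geometric_two fun n => hψ n t
  refine ⟨fun t => ∑' n, ψ n t, continuous_tsum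
    (fun n => continuous_const.mul (continuous_excursion hf _)) summable_geometric_two hψ,
    fun s hs t hst => ?_⟩
  have hmono : ∀ n, ψ n s ≤ ψ n t := fun n =>
    mul_le_mul_of_nonneg_left (excursion_mono hf hs hst) (by positivity)
  refine ⟨(hsum s).tsum_le_tsum hmono (hsum t), fun heq => tsum_congr fun n => ?_, fun heq => ?_⟩
  · exact congrArg ((1 / 2 : ℝ) ^ n * ·) (excursion_eq_of_eq hf hfib hs hst heq)
  by_contra hne
  have hlt : s < t := hst.lt_of_ne (by rintro rfl; exact hne rfl)
  have hnear : ∀ᶠ r in 𝓝[>] s, f r ≠ f t := hf.continuousWithinAt.eventually_ne hne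
  obtain ⟨b, hb, hsb⟩ := (mem_nhdsGT_iff_exists_Ioo_subset' hlt).1 hnear
  obtain ⟨n, hn⟩ := (TopologicalSpace.denseRange_denseSeq ℝ).exists_mem_open isOpen_Ioo
    (nonempty_Ioo.2 (lt_min hb hlt))
  have hstrict : ψ n s < ψ n t := mul_lt_mul_of_pos_left
    (excursion_lt hf hs ⟨hn.1, hn.2.trans_le (min_le_right _ _)⟩
      (hsb ⟨hn.1, hn.2.trans_le (min_le_left _ _)⟩)) (by positivity)
  exact (Summable.tsum_lt_tsum hmono hstrict (hsum s) (hsum t)).ne heq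

end Excursion

lemma exists_continuousOn_comp_eq {A B C : Type*} [TopologicalSpace A] [TopologicalSpace B]
    [TopologicalSpace C] [T2Space A] [T2Space B] [Nonempty A] {K : Set A} {φ : A → B} {f : A → C}
    (hK : IsCompact K) (hφ : ContinuousOn φ K) (hf : ContinuousOn f K)
    (h : ∀ s ∈ K, ∀ t ∈ K, φ s = φ t → f s = f t) :
    ∃ g : B → C, ContinuousOn g (φ '' K) ∧ EqOn (g ∘ φ) f K := by
  have hcomp : EqOn ((f ∘ Function.invFunOn φ K) ∘ φ) f K := fun s hs =>
    h _ (Function.invFunOn_apply_mem hs) s hs (Function.invFunOn_apply_eq hs)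
  refine ⟨f ∘ Function.invFunOn φ K, continuousOn_iff_isClosed.2 fun Z hZ =>
    ⟨φ '' (K ∩ f ⁻¹' Z), ?_, ?_⟩, hcomp⟩
  · have hZK : IsClosed (K ∩ f ⁻¹' Z) := hf.preimage_isClosed_of_isClosed hK.isClosed hZ
    exact ((hK.of_isClosed_subset hZK inter_subset_left).image_of_continuousOn
      (hφ.mono inter_subset_left)).isClosed
  · ext y
    refine ⟨?_, ?_⟩
    · rintro ⟨hyZ, s, hs, rfl⟩
      exact ⟨⟨s, ⟨hs, by rwa [mem_preimage, ← hcomp hs]⟩, rfl⟩, s, hs, rfl⟩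
    · rintro ⟨⟨s, ⟨hs, hsZ⟩, rfl⟩, hy⟩
      exact ⟨(hcomp hs).symm.subst (motive := (· ∈ Z)) hsZ, hy⟩

lemma isArc_image_of_ordConnected_fibres {X : Type*} [MetricSpace X] {f : ℝ → X}
    (hf : Continuous f) (hfib : ∀ x, (f ⁻¹' {x}).OrdConnected) :
    IsArc (f '' Icc 0 1) (f 0) (f 1) := by
  obtain ⟨φ, hφ, h⟩ := exists_continuous_eq_iff_eq hf hfib
  have himage : φ '' Icc 0 1 = Icc (φ 0) (φ 1) :=
    Subset.antisymm (image_subset_iff.2 fun t ht => ⟨(h 0 le_rfl t ht.1).1, (h t ht.1 1 ht.2).1⟩)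
      (intermediate_value_Icc zero_le_one hφ.continuousOn)
  have hiff : ∀ s ∈ Icc (0 : ℝ) 1, ∀ t ∈ Icc (0 : ℝ) 1, (f s = f t ↔ φ s = φ t) := by
    intro s hs t ht
    rcases le_total s t with hst | hst
    · exact (h s hs.1 t hst).2
    · rw [eq_comm, (h t ht.1 s hst).2, eq_comm]
  obtain ⟨g, hg, hgf⟩ := exists_continuousOn_comp_eq isCompact_Icc hφ.continuousOn hf.continuousOn
    fun s hs t ht => (hiff s hs t ht).2
  have h0 : (0 : ℝ) ∈ Icc (0 : ℝ) 1 := by simp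
  have h1 : (1 : ℝ) ∈ Icc (0 : ℝ) 1 := by simp
  rw [himage] at hg
  refine ⟨g, φ 0, φ 1, (h 0 le_rfl 1 zero_le_one).1, hg, ?_, hgf h0, hgf h1, ?_⟩
  · rw [← himage]
    rintro _ ⟨s, hs, rfl⟩ _ ⟨t, ht, rfl⟩ hst
    exact (hiff s hs t ht).1 ((hgf hs).symm.trans (hst.trans (hgf ht)))
  · rw [← himage, ← image_comp, hgf.image_eq]

lemma exists_isArc_of_joinedIn {X : Type*} [MetricSpace X] {S : Set X} {x y : X}
    (h : JoinedIn S x y) : ∃ A ⊆ S, IsArc A x y := by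
  obtain ⟨γ, hγ⟩ := h
  obtain ⟨f, hf, hf0, hf1, hsub, hfib⟩ := exists_ordConnected_fibres γ.continuous_extend
  refine ⟨f '' Icc 0 1, hsub.trans (image_subset_iff.2 fun t ht => ?_), ?_⟩
  · rw [mem_preimage, γ.extend_apply ht]
    exact hγ _
  · have harc := isArc_image_of_ordConnected_fibres hf hfib
    rwa [hf0, hf1, γ.extend_zero, γ.extend_one] at harc

end PathsToArcs

section CyclicSets

variable {X : Type} [TopologicalSpace X] {J S T D A E : Set X} {a b c d p q u v x y z : X}

lemma IsArc.exists_subset_inter_eq [T2Space X] (hA : IsArc A x y) (hD : IsClosed D)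
    (h : (A ∩ D).Nonempty) : ∃ B ⊆ A, ∃ z, IsArc B x z ∧ B ∩ D = {z} := by
  obtain ⟨z, B, C, hB, -, rfl, -, hBD⟩ := hA.exists_first hD h
  exact ⟨B, subset_union_left, z, hB, hBD⟩

lemma IsArc.exists_disjoint_to_endpoints [T1Space X] (hE : IsArc E c d) (hp : p ∈ E) (hq : q ∈ E)
    (hpq : p ≠ q) :
    ∃ P ⊆ E, ∃ Q ⊆ E, ∃ a ∈ ({c, d} : Set X), ∃ b ∈ ({c, d} : Set X),
      IsArc P p a ∧ IsArc Q q b ∧ Disjoint P Q := by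
  obtain ⟨E₁, E₂, hE₁, hE₂, rfl, hE₁₂⟩ := hE.split hp
  rcases hq with hq | hq
  · obtain ⟨F₁, F₂, hF₁, hF₂, rfl, hF₁₂⟩ := hE₁.split hq
    refine ⟨E₂, subset_union_right, F₁, subset_union_left.trans subset_union_left, d, by simp, c,
      by simp, hE₂, hF₁.symm, disjoint_left.2 fun x hx₂ hx₁ => hpq ?_⟩
    obtain rfl : x = p := hE₁₂.subset ⟨Or.inl hx₁, hx₂⟩
    exact hF₁₂.subset ⟨hx₁, hF₂.right_mem⟩
  · obtain ⟨F₁, F₂, hF₁, hF₂, rfl, hF₁₂⟩ := hE₂.split hq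
    refine ⟨E₁, subset_union_left, F₂, subset_union_right.trans subset_union_right, c, by simp, d,
      by simp, hE₁.symm, hF₂, disjoint_left.2 fun x hx₁ hx₂ => hpq ?_⟩
    obtain rfl : x = p := hE₁₂.subset ⟨hx₁, Or.inr hx₂⟩
    exact hF₁₂.subset ⟨hF₁.left_mem, hx₂⟩

lemma IsJordanCurve.cyclicallyConnected (hJ : IsJordanCurve J) : CyclicallyConnected J :=
  fun _ hx _ hy => ⟨J, Subset.rfl, hJ, hx, hy⟩

lemma IsJordanCurve.exists_of_chord [T2Space X] (hJ : IsJordanCurve J) (hE : IsArc E c d)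
    (hcd : c ≠ d) (hEJ : E ∩ J = {c, d}) (hx : x ∈ J) :
    ∃ J', IsJordanCurve J' ∧ J' ⊆ E ∪ J ∧ E ⊆ J' ∧ x ∈ J' := by
  have hc : c ∈ E ∩ J := hEJ.symm.subset (Or.inl rfl)
  have hd : d ∈ E ∩ J := hEJ.symm.subset (Or.inr rfl)
  obtain ⟨F₁, F₂, hF₁, hF₂, rfl, -⟩ := hJ.exists_arcs hc.2 hd.2 hcd
  obtain ⟨F, hF, hFJ, hxF⟩ : ∃ F, IsArc F c d ∧ F ⊆ F₁ ∪ F₂ ∧ x ∈ F :=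
    hx.elim (fun h => ⟨F₁, hF₁, subset_union_left, h⟩) fun h => ⟨F₂, hF₂, subset_union_right, h⟩
  exact ⟨E ∪ F, hE.isJordanCurve_union hF hcd (hEJ ▸ inter_subset_inter_right E hFJ),
    union_subset_union_right E hFJ, subset_union_left, Or.inr hxF⟩

namespace CyclicallyConnected

lemma exists_isArc_avoiding (hT : CyclicallyConnected T) (hx : x ∈ T) (hy : y ∈ T) (hxz : x ≠ z)
    (hyz : y ≠ z) : ∃ A ⊆ T, IsArc A x y ∧ z ∉ A := by
  rcases eq_or_ne x y with rfl | hxy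
  · exact ⟨{x}, singleton_subset_iff.2 hx, IsArc.singleton x, fun h => hxz (Eq.symm h)⟩
  obtain ⟨J, hJT, hJ, hxJ, hyJ⟩ := hT x hx y hy
  obtain ⟨A, B, hA, hB, rfl, hAB⟩ := hJ.exists_arcs hxJ hyJ hxy
  by_cases hz : z ∈ A
  · refine ⟨B, subset_union_right.trans hJT, hB, fun hz' => ?_⟩
    rcases hAB.subset ⟨hz, hz'⟩ with h | h
    exacts [hxz h.symm, hyz h.symm]
  · exact ⟨A, subset_union_left.trans hJT, hA, hz⟩

lemma exists_isArc (hT : CyclicallyConnected T) (hx : x ∈ T) (hy : y ∈ T) :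
    ∃ A ⊆ T, IsArc A x y := by
  rcases eq_or_ne x y with rfl | hxy
  · exact ⟨{x}, singleton_subset_iff.2 hx, IsArc.singleton x⟩
  obtain ⟨J, hJT, hJ, hxJ, hyJ⟩ := hT x hx y hy
  obtain ⟨A, B, hA, -, rfl, -⟩ := hJ.exists_arcs hxJ hyJ hxy
  exact ⟨A, subset_union_left.trans hJT, hA⟩

lemma isPreconnected_diff_singleton (hT : CyclicallyConnected T) (z : X) :
    IsPreconnected (T \ {z}) := by
  refine isPreconnected_of_forall_pair fun x hx y hy => ?_
  obtain ⟨A, hAT, hA, hz⟩ := hT.exists_isArc_avoiding hx.1 hy.1 hx.2 hy.2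
  exact ⟨A, fun w hw => ⟨hAT hw, fun h => hz (h ▸ hw)⟩, hA.left_mem, hA.right_mem,
    hA.isPathConnected.isConnected.isPreconnected⟩

/- An arc from `b` that avoids `a` enters a Jordan curve through `v` and `a` at a point of one of
its two arcs from `v` to `a`; the other one leads to `a`. -/
lemma exists_isArc_pair [T2Space X] (hT : CyclicallyConnected T) (hv : v ∈ T) (ha : a ∈ T)
    (hb : b ∈ T) (hva : v ≠ a) (hab : a ≠ b) :
    ∃ A ⊆ T, ∃ B ⊆ T, IsArc A v a ∧ IsArc B v b ∧ A ∩ B ⊆ {v} := by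
  obtain ⟨J, hJT, hJ, hvJ, haJ⟩ := hT v hv a ha
  obtain ⟨C, hCT, hC, haC⟩ := hT.exists_isArc_avoiding hb hv hab.symm hva
  obtain ⟨B, hBC, w, hB, hBJ⟩ :=
    hC.exists_subset_inter_eq hJ.isCompact.isClosed ⟨v, hC.right_mem, hvJ⟩
  have hw : w ∈ B ∩ J := hBJ.symm.subset rfl
  obtain ⟨P, Q, hP, hQ, hPJ, hQJ, hPQ, hwP⟩ : ∃ P Q, IsArc P v a ∧ IsArc Q v a ∧ P ⊆ J ∧ Q ⊆ J ∧
      P ∩ Q = {v, a} ∧ w ∈ P := by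
    obtain ⟨P, Q, hP, hQ, rfl, hPQ⟩ := hJ.exists_arcs hvJ haJ hva
    rcases hw.2 with h | h
    · exact ⟨P, Q, hP, hQ, subset_union_left, subset_union_right, hPQ, h⟩
    · exact ⟨Q, P, hQ, hP, subset_union_right, subset_union_left, inter_comm P Q ▸ hPQ, h⟩
  obtain ⟨P₁, P₂, hP₁, hP₂, rfl, hP₁₂⟩ := hP.split hwP
  have haP₁ : a ∉ P₁ := fun h => haC (hBC
    ((hP₁₂.subset ⟨h, hP₂.right_mem⟩ : a = w) ▸ hw.1))
  have hQP₁ : ∀ x ∈ Q, x ∈ P₁ → x = v := fun x hxQ hxP =>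
    (hPQ.subset ⟨Or.inl hxP, hxQ⟩).resolve_right (by rintro rfl; exact haP₁ hxP)
  refine ⟨Q, hQJ.trans hJT, P₁ ∪ B, union_subset
    (subset_union_left.trans (hPJ.trans hJT)) (hBC.trans hCT), hQ, hP₁.trans hB.symm ?_, ?_⟩
  · exact fun x hx => hBJ.subset ⟨hx.2, hPJ (Or.inl hx.1)⟩
  · rintro x ⟨hxQ, hxP | hxB⟩
    · exact hQP₁ x hxQ hxP
    · obtain rfl : x = w := hBJ.subset ⟨hxB, hQJ hxQ⟩
      exact hQP₁ x hxQ hP₁.right_mem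

lemma exists_chord [T2Space X] (hT : CyclicallyConnected T) (hD : IsClosed D) (hab : a ≠ b)
    (ha : a ∈ T ∩ D) (hb : b ∈ T ∩ D) (hv : v ∈ T) (hvD : v ∉ D) :
    ∃ E ⊆ T, ∃ c d, c ≠ d ∧ IsArc E c d ∧ E ∩ D = {c, d} ∧ v ∈ E := by
  have hva : v ≠ a := fun h => hvD (h ▸ ha.2)
  obtain ⟨A, hAT, B, hBT, hA, hB, hAB⟩ := hT.exists_isArc_pair hv ha.1 hb.1 hva hab
  obtain ⟨A', hA'A, c, hA', hA'D⟩ := hA.exists_subset_inter_eq hD ⟨a, hA.right_mem, ha.2⟩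
  obtain ⟨B', hB'B, d, hB', hB'D⟩ := hB.exists_subset_inter_eq hD ⟨b, hB.right_mem, hb.2⟩
  have hAB' : A' ∩ B' ⊆ {v} := (inter_subset_inter hA'A hB'B).trans hAB
  refine ⟨A' ∪ B', union_subset (hA'A.trans hAT) (hB'B.trans hBT), c, d, ?_,
    hA'.symm.trans hB' hAB', ?_, Or.inl hA'.left_mem⟩
  · rintro rfl
    obtain rfl : c = v := hAB' ⟨hA'.right_mem, hB'.right_mem⟩
    exact hvD (hA'D.symm.subset rfl).2
  · rw [union_inter_distrib_right, hA'D, hB'D, singleton_union]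

/- If `v ∉ D`, an arc from `u` that avoids `v` is followed until it meets `D` or a chord of `D`
through `v`. -/
lemma exists_disjoint_arcs_to [T2Space X] (hT : CyclicallyConnected T) (hD : IsClosed D)
    (hab : a ≠ b) (ha : a ∈ T ∩ D) (hb : b ∈ T ∩ D) (hu : u ∈ T) (hv : v ∈ T) (huv : u ≠ v) :
    ∃ P ⊆ T, ∃ Q ⊆ T, ∃ p ∈ D, ∃ q ∈ D, IsArc P u p ∧ IsArc Q v q ∧ Disjoint P Q := by
  obtain ⟨e, he, hev⟩ : ∃ e ∈ T ∩ D, e ≠ v := by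
    rcases eq_or_ne a v with rfl | hav
    exacts [⟨b, hb, hab.symm⟩, ⟨a, ha, hav⟩]
  obtain ⟨A, hAT, hA, hvA⟩ := hT.exists_isArc_avoiding hu he.1 huv hev
  by_cases hvD : v ∈ D
  · exact ⟨A, hAT, {v}, singleton_subset_iff.2 hv, e, he.2, v, hvD, hA, IsArc.singleton v,
      disjoint_singleton_right.2 hvA⟩
  obtain ⟨E, hET, c, d, -, hE, hED, hvE⟩ := hT.exists_chord hD hab ha hb hv hvD
  have hcdD : {c, d} ⊆ D := hED ▸ inter_subset_right
  obtain ⟨B, hBA, w, hB, hBDE⟩ := hA.exists_subset_inter_eq (hD.union hE.isClosed)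
    ⟨e, hA.right_mem, Or.inl he.2⟩
  have hBE : ∀ x ∈ B, x ∈ E → x = w := fun x hx hxE => hBDE.subset ⟨hx, Or.inr hxE⟩
  by_cases hwE : w ∈ E
  · have hwv : w ≠ v := fun h => hvA (hBA (h ▸ hB.right_mem))
    obtain ⟨P, hPE, Q, hQE, p, hp, q, hq, hP, hQ, hPQ⟩ :=
      hE.exists_disjoint_to_endpoints hwE hvE hwv
    refine ⟨B ∪ P, union_subset (hBA.trans hAT) (hPE.trans hET), Q, hQE.trans hET, p, hcdD hp, q,
      hcdD hq, hB.trans hP fun x hx => hBE x hx.1 (hPE hx.2), hQ,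
      disjoint_union_left.2 ⟨disjoint_left.2 fun x hxB hxQ => ?_, hPQ⟩⟩
    obtain rfl := hBE x hxB (hQE hxQ)
    exact disjoint_left.1 hPQ hP.left_mem hxQ
  · have hwD : w ∈ D := (hBDE.symm.subset rfl).2.resolve_right hwE
    obtain ⟨F, Q, -, hQ, rfl, -⟩ := hE.split hvE
    refine ⟨B, hBA.trans hAT, Q, subset_union_right.trans hET, w, hwD, d, hcdD (by simp), hB, hQ,
      disjoint_left.2 fun x hxB hxQ => hwE ?_⟩
    exact hBE x hxB (Or.inr hxQ) ▸ Or.inr hxQ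

lemma exists_disjoint_arcs [T2Space X] (hT : CyclicallyConnected T) (hD : IsClosed D) (hab : a ≠ b)
    (ha : a ∈ T ∩ D) (hb : b ∈ T ∩ D) (hu : u ∈ T) (hv : v ∈ T) (huv : u ≠ v) :
    ∃ P ⊆ T, ∃ Q ⊆ T, ∃ p q, IsArc P u p ∧ IsArc Q v q ∧ Disjoint P Q ∧
      P ∩ D = {p} ∧ Q ∩ D = {q} := by
  obtain ⟨P, hPT, Q, hQT, p, hp, q, hq, hP, hQ, hPQ⟩ :=
    hT.exists_disjoint_arcs_to hD hab ha hb hu hv huv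
  obtain ⟨P', hP'P, p', hP', hP'D⟩ := hP.exists_subset_inter_eq hD ⟨p, hP.right_mem, hp⟩
  obtain ⟨Q', hQ'Q, q', hQ', hQ'D⟩ := hQ.exists_subset_inter_eq hD ⟨q, hQ.right_mem, hq⟩
  exact ⟨P', hP'P.trans hPT, Q', hQ'Q.trans hQT, p', q', hP', hQ', hPQ.mono hP'P hQ'Q, hP'D, hQ'D⟩

lemma union_of_forall_exists (hS : CyclicallyConnected S) (hT : CyclicallyConnected T)
    (h : ∀ x ∈ S, ∀ y ∈ T, ∃ J ⊆ S ∪ T, IsJordanCurve J ∧ x ∈ J ∧ y ∈ J) :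
    CyclicallyConnected (S ∪ T) := by
  rintro x (hx | hx) y (hy | hy)
  · obtain ⟨J, hJS, hJ⟩ := hS x hx y hy
    exact ⟨J, hJS.trans subset_union_left, hJ⟩
  · exact h x hx y hy
  · obtain ⟨J, hJST, hJ, hyJ, hxJ⟩ := h y hy x hx
    exact ⟨J, hJST, hJ, hxJ, hyJ⟩
  · obtain ⟨J, hJT, hJ⟩ := hT x hx y hy
    exact ⟨J, hJT.trans subset_union_right, hJ⟩

lemma jordanCurve_union [T2Space X] (hT : CyclicallyConnected T) (hJ : IsJordanCurve J)
    (hpq : p ≠ q) (hp : p ∈ J ∩ T) (hq : q ∈ J ∩ T) : CyclicallyConnected (J ∪ T) := by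
  refine hJ.cyclicallyConnected.union_of_forall_exists hT fun x hx y hy => ?_
  by_cases hyJ : y ∈ J
  · exact ⟨J, subset_union_left, hJ, hx, hyJ⟩
  obtain ⟨E, hET, c, d, hcd, hE, hEJ, hyE⟩ :=
    hT.exists_chord hJ.isCompact.isClosed hpq hp.symm hq.symm hy hyJ
  obtain ⟨J', hJ', hJ'EJ, hEJ', hxJ'⟩ := hJ.exists_of_chord hE hcd hEJ hx
  exact ⟨J', hJ'EJ.trans (union_comm J T ▸ union_subset_union_left J hET), hJ', hxJ', hEJ' hyE⟩

/- A point `x ∈ S` lies on a Jordan curve in `S` that shares two points with a given one `J`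
through `p` and `q`; both curves are added to `T`. -/
lemma union [T2Space X] (hS : CyclicallyConnected S) (hT : CyclicallyConnected T) (hpq : p ≠ q)
    (hp : p ∈ S ∩ T) (hq : q ∈ S ∩ T) : CyclicallyConnected (S ∪ T) := by
  refine hS.union_of_forall_exists hT fun x hx y hy => ?_
  obtain ⟨J, hJS, hJ, hpJ, hqJ⟩ := hS p hp.1 q hq.1
  obtain ⟨J', hJ'S, hJ', hxJ', c, hc, d, hd, hcd⟩ : ∃ J' ⊆ S, IsJordanCurve J' ∧ x ∈ J' ∧
      ∃ c ∈ J' ∩ J, ∃ d ∈ J' ∩ J, c ≠ d := by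
    by_cases hxJ : x ∈ J
    · exact ⟨J, hJS, hJ, hxJ, p, ⟨hpJ, hpJ⟩, q, ⟨hqJ, hqJ⟩, hpq⟩
    obtain ⟨E, hES, c, d, hcd, hE, hEJ, hxE⟩ :=
      hS.exists_chord hJ.isCompact.isClosed hpq ⟨hp.1, hpJ⟩ ⟨hq.1, hqJ⟩ hx hxJ
    obtain ⟨J', hJ', hJ'EJ, hEJ', -⟩ := hJ.exists_of_chord hE hcd hEJ hpJ
    exact ⟨J', hJ'EJ.trans (union_subset hES hJS), hJ', hEJ' hxE, c,
      ⟨hEJ' hE.left_mem, (hEJ.symm.subset (by simp)).2⟩, d,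
      ⟨hEJ' hE.right_mem, (hEJ.symm.subset (by simp)).2⟩, hcd⟩
  have hJT := hT.jordanCurve_union hJ hpq ⟨hpJ, hp.2⟩ ⟨hqJ, hq.2⟩
  obtain ⟨J₀, hJ₀, h⟩ := hJT.jordanCurve_union hJ' hcd ⟨hc.1, Or.inl hc.2⟩ ⟨hd.1, Or.inl hd.2⟩
    x (Or.inl hxJ') y (Or.inr (Or.inr hy))
  exact ⟨J₀, hJ₀.trans (union_subset (hJ'S.trans subset_union_left)
    (union_subset_union_left T hJS)), h⟩

end CyclicallyConnected

namespace MaximalCyclic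

lemma subset_of_mem_inter [T2Space X] (hT : MaximalCyclic T) (hS : CyclicallyConnected S)
    (hpq : p ≠ q) (hp : p ∈ S ∩ T) (hq : q ∈ S ∩ T) : S ⊆ T := by
  rw [← hT.2.2 _ (hS.union hT.2.1 hpq hp hq) subset_union_right]
  exact subset_union_left

lemma inter_subsingleton [T2Space X] (hS : MaximalCyclic S) (hT : MaximalCyclic T) (hne : S ≠ T) :
    (S ∩ T).Subsingleton := by
  intro p hp q hq
  by_contra hpq
  exact hne ((hT.subset_of_mem_inter hS.2.1 hpq hp hq).antisymm
    (hS.subset_of_mem_inter hT.2.1 hpq hp.symm hq.symm))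

lemma subset_of_isArc [T2Space X] (hT : MaximalCyclic T) (hA : IsArc A x y) (hx : x ∈ T)
    (hy : y ∈ T) : A ⊆ T := by
  intro z hz
  by_contra hzT
  obtain ⟨J, hJT, hJ, hxJ, hyJ⟩ := hT.2.1 x hx y hy
  obtain ⟨A₁, A₂, hA₁, hA₂, rfl, hA₁₂⟩ := hA.split hz
  obtain ⟨B, hBA₁, c, hB, hBJ⟩ := hA₁.symm.exists_subset_inter_eq hJ.isCompact.isClosed
    ⟨x, hA₁.left_mem, hxJ⟩
  obtain ⟨C, hCA₂, d, hC, hCJ⟩ := hA₂.exists_subset_inter_eq hJ.isCompact.isClosed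
    ⟨y, hA₂.right_mem, hyJ⟩
  have hBC : B ∩ C ⊆ {z} := (inter_subset_inter hBA₁ hCA₂).trans hA₁₂.subset
  have hcJ : c ∈ J := (hBJ.symm.subset rfl).2
  have hdJ : d ∈ J := (hCJ.symm.subset rfl).2
  have hcd : c ≠ d := by
    rintro rfl
    obtain rfl : c = z := hBC ⟨hB.right_mem, hC.right_mem⟩
    exact hzT (hJT hcJ)
  obtain ⟨J', hJ', -, hEJ', -⟩ := hJ.exists_of_chord (hB.symm.trans hC hBC) hcd
    (by rw [union_inter_distrib_right, hBJ, hCJ, singleton_union]) hxJ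
  exact hzT (hT.subset_of_mem_inter hJ'.cyclicallyConnected hcd
    ⟨hEJ' (Or.inl hB.right_mem), hJT hcJ⟩ ⟨hEJ' (Or.inr hC.right_mem), hJT hdJ⟩
    (hEJ' (Or.inl hB.left_mem)))

end MaximalCyclic

end CyclicSets

section LocallyPathConnected

variable {X : Type*} [TopologicalSpace X] [LocallyPathConnectedSpace X] {C K N M O W : Set X}
  {p x y z : X}

lemma exists_isPathConnected_nhds_subset (hN : N ∈ 𝓝 p) : ∃ M ∈ 𝓝 p, IsPathConnected M ∧ M ⊆ N := by
  obtain ⟨M, hM, hMN⟩ := (path_connected_basis p).mem_iff.1 hN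
  exact ⟨M, hM.1, hM.2, hMN⟩

lemma mem_pathComponentIn_of_mem_closure (hO : IsOpen O) (hz : z ∈ closure (pathComponentIn O x))
    (hzO : z ∈ O) : z ∈ pathComponentIn O x := by
  obtain ⟨w, hwz, hwx⟩ := mem_closure_iff.1 hz _ (hO.pathComponentIn z)
    (mem_pathComponentIn_self hzO)
  exact JoinedIn.trans hwx (JoinedIn.symm hwz)

lemma exists_mem_closure_pathComponentIn_sdiff (hC : IsPreconnected C) (hO : IsOpen O) (hx : x ∈ C)
    (hxO : x ∈ O) (hy : y ∈ C) (hyO : y ∉ pathComponentIn O x) :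
    ∃ z ∈ C, z ∈ closure (pathComponentIn O x) \ O := by
  by_contra! h
  have hclosure : C ∩ closure (pathComponentIn O x) ⊆ pathComponentIn O x := fun z hz =>
    mem_pathComponentIn_of_mem_closure hO hz.2 (by_contra fun hzO => h z hz.1 ⟨hz.2, hzO⟩)
  obtain ⟨z, -, hz, hz'⟩ := hC _ (closure (pathComponentIn O x))ᶜ (hO.pathComponentIn x)
    isClosed_closure.isOpen_compl
    (fun z hz => or_iff_not_imp_right.2 fun hz' => hclosure ⟨hz, not_notMem.1 hz'⟩)
    ⟨x, hx, mem_pathComponentIn_self hxO⟩ ⟨y, hy, fun hy' => hyO (hclosure ⟨hy, hy'⟩)⟩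
  exact hz' (subset_closure hz)

lemma eventually_forall_joinedIn_sdiff_pair [T2Space X] (hK : IsCompact K) (hW : IsOpen W)
    (hKW : K ⊆ W) (hp : p ∉ K) :
    ∀ᶠ q in 𝓝 p, ∀ w ∈ K, JoinedIn (W \ {p}) w y → JoinedIn (W \ {p, q}) w y := by
  refine hK.eventually_forall_of_forall_eventually fun w hw => ?_
  obtain ⟨U, V, hU, hV, hUV⟩ := t2_separation_nhds (show w ≠ p from fun h => hp (h ▸ hw))
  obtain ⟨N, hN, hNc, hNWU⟩ := exists_isPathConnected_nhds_subset
    (inter_mem (hW.mem_nhds (hKW hw)) hU)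
  have hNV : ∀ q ∈ V, N ⊆ W \ {q} := fun q hq x hx =>
    ⟨(hNWU hx).1, fun e => disjoint_left.1 hUV (hNWU hx).2 (e ▸ hq)⟩
  have hpV : p ∈ V := mem_of_mem_nhds hV
  have hwN : w ∈ N := mem_of_mem_nhds hN
  by_cases hwy : JoinedIn (W \ {p}) w y
  · obtain ⟨σ, hσ⟩ := hwy
    have hσp : (range σ)ᶜ ∈ 𝓝 p := (isCompact_range σ.continuous).isClosed.compl_mem_nhds
      (by rintro ⟨t, ht⟩; exact (hσ t).2 ht)
    filter_upwards [prod_mem_nhds (inter_mem hV hσp) hN] with ⟨q, w'⟩ ⟨⟨hqV, hqσ⟩, hw'⟩ _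
    have hNpq : N ⊆ W \ {p, q} := fun x hx =>
      ⟨(hNWU hx).1, fun h => h.elim (hNV p hpV hx).2 (hNV q hqV hx).2⟩
    exact ((hNc.joinedIn w' hw' w hwN).mono hNpq).trans
      ⟨σ, fun t => ⟨(hσ t).1, fun h => h.elim (hσ t).2 fun e => hqσ ⟨t, e⟩⟩⟩
  · filter_upwards [prod_mem_nhds univ_mem hN] with ⟨q, w'⟩ ⟨_, hw'⟩ hw'y
    exact absurd (((hNc.joinedIn w hwN w' hw').mono (hNV p hpV)).trans hw'y) hwy

end LocallyPathConnected

section Approach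

variable {X : Type} [MetricSpace X] {T W : Set X} {γ : ℝ → X} {L a b r z δ : ℝ} {p : X}

/-- The path `γ` starts outside `T`, is injective on `[0, L]` and runs inside `T` on `(0, L]`:
an approach from `T` to the point `γ 0` of its closure. -/
structure IsApproach (T : Set X) (γ : ℝ → X) (L : ℝ) : Prop where
  pos : 0 < L
  continuous : Continuous γ
  injOn : InjOn γ (Icc 0 L)
  notMem : γ 0 ∉ T
  mem : ∀ t ∈ Ioc 0 L, γ t ∈ T

namespace IsApproach

lemma ne (h : IsApproach T γ L) {s t : ℝ} (hs : s ∈ Icc 0 L) (ht : t ∈ Icc 0 L) (hst : s ≠ t) :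
    γ s ≠ γ t := fun e => hst (h.injOn hs ht e)

lemma isArc (h : IsApproach T γ L) (ha : 0 ≤ a) (hab : a ≤ b) (hb : b ≤ L) :
    IsArc (γ '' Icc a b) (γ a) (γ b) :=
  isArc_image hab h.continuous.continuousOn (h.injOn.mono (Icc_subset_Icc ha hb))

lemma image_Icc_subset_sdiff (h : IsApproach T γ L) (ha : 0 < a) (hbδ : b ≤ δ) (hδ : δ ≤ L)
    (hγW : γ '' Icc 0 δ ⊆ W) : γ '' Icc a b ⊆ W \ {γ 0} := by
  rintro _ ⟨t, ht, rfl⟩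
  have ht₀ : 0 < t := ha.trans_le ht.1
  exact ⟨hγW ⟨t, ⟨ht₀.le, ht.2.trans hbδ⟩, rfl⟩,
    h.ne ⟨ht₀.le, ht.2.trans (hbδ.trans hδ)⟩ (left_mem_Icc.2 h.pos.le) ht₀.ne'⟩

end IsApproach

lemma MaximalCyclic.exists_isArc_of_mem_closure [LocallyPathConnectedSpace X]
    (hT : MaximalCyclic T) (hp : p ∈ closure T) (hpT : p ∉ T) :
    ∃ A t, IsArc A p t ∧ p ≠ t ∧ A \ {p} ⊆ T := by
  obtain ⟨N₀, hN₀, hN₀c, -⟩ := exists_isPathConnected_nhds_subset (p := p) univ_mem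
  obtain ⟨t₀, ht₀N, ht₀⟩ := mem_closure_iff_nhds.1 hp N₀ hN₀
  obtain ⟨A, -, hA⟩ := exists_isArc_of_joinedIn (hN₀c.joinedIn p (mem_of_mem_nhds hN₀) t₀ ht₀N)
  refine ⟨A, t₀, hA, fun h => hpT (h ▸ ht₀), fun x ⟨hxA, hxp⟩ => ?_⟩
  obtain ⟨A₁, A₂, hA₁, hA₂, rfl, hA₁₂⟩ := hA.split hxA
  have hpA₂ : p ∉ A₂ := fun h => hxp (hA₁₂.subset ⟨hA₁.left_mem, h⟩).symm
  obtain ⟨D, ⟨hD, hDc⟩, hDA₂⟩ := (closed_nhds_basis p).mem_iff.1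
    (hA₂.isClosed.compl_mem_nhds hpA₂)
  obtain ⟨N, hN, hNc, hND⟩ := exists_isPathConnected_nhds_subset hD
  obtain ⟨t, htN, ht⟩ := mem_closure_iff_nhds.1 hp N hN
  obtain ⟨B, hBN, hB⟩ := exists_isArc_of_joinedIn
    (((hNc.joinedIn t htN p (mem_of_mem_nhds hN)).mono subset_union_left).trans
      (hA.joinedIn.mono (subset_union_right (s := N))))
  obtain ⟨w, hwB, hwA₂, hw⟩ := isPreconnected_closed_iff.1
    hB.isPathConnected.isConnected.isPreconnected A₂ (A₁ ∪ D) hA₂.isClosed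
    (hA₁.isClosed.union hDc)
    (fun w hw => (hBN hw).elim (fun h => Or.inr (Or.inr (hND h)))
      fun h => h.elim (fun h => Or.inr (Or.inl h)) Or.inl)
    ⟨t₀, hB.right_mem, hA₂.right_mem⟩ ⟨t, hB.left_mem, Or.inr (hND htN)⟩
  obtain rfl : w = x := hw.elim (fun h => hA₁₂.subset ⟨h, hwA₂⟩) fun h => absurd hwA₂ (hDA₂ h)
  exact hT.subset_of_isArc hB ht ht₀ hwB

lemma MaximalCyclic.exists_isApproach [LocallyPathConnectedSpace X] (hT : MaximalCyclic T)
    (hp : p ∈ closure T) (hpT : p ∉ T) : ∃ γ L, IsApproach T γ L ∧ γ 0 = p := by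
  obtain ⟨A, t, hA, hpt, hAT⟩ := hT.exists_isArc_of_mem_closure hp hpT
  obtain ⟨γ, L, hL, hγ, hinj, rfl, rfl, rfl⟩ := hA.exists_param_from 0
  have hL₀ : L ≠ 0 := by rintro rfl; exact hpt rfl
  have heq : EqOn (IccExtend hL (domRestrict (Icc 0 L) γ)) γ (Icc 0 L) := fun t ht =>
    IccExtend_of_mem hL _ ht
  have heq₀ := heq (left_mem_Icc.2 hL)
  refine ⟨_, L, ⟨hL.lt_of_ne' hL₀, hγ.domRestrict.Icc_extend', hinj.congr heq.symm, heq₀ ▸ hpT,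
    fun t ht => ?_⟩, heq₀⟩
  rw [heq (Ioc_subset_Icc_self ht)]
  exact hAT ⟨mem_image_of_mem γ (Ioc_subset_Icc_self ht),
    fun e => ht.1.ne' (hinj (Ioc_subset_Icc_self ht) (left_mem_Icc.2 hL) e)⟩

namespace IsApproach

/- Otherwise the path component `C` of `γ (z / 2)` in `W \ {γ 0, γ z}` misses `γ δ`. As
`T \ {γ z}` is connected, `C` accumulates outside `W`, so it meets the sphere. -/
lemma joinedIn_sdiff_pair_of_sphere [LocallyPathConnectedSpace X] (h : IsApproach T γ L)
    (hT : CyclicallyConnected T) (hW : IsOpen W) (hrW : closedBall (γ 0) r ⊆ W) (hz : 0 < z)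
    (hzr : dist (γ (z / 2)) (γ 0) ≤ r) (hzδ : z < δ) (hδ : δ ≤ L) (hγW : γ '' Icc 0 δ ⊆ W)
    (hsphere : ∀ w ∈ sphere (γ 0) r, JoinedIn (W \ {γ 0}) w (γ δ) →
      JoinedIn (W \ {γ 0, γ z}) w (γ δ)) :
    JoinedIn (W \ {γ 0, γ z}) (γ (z / 2)) (γ δ) := by
  set C := pathComponentIn (W \ {γ 0, γ z}) (γ (z / 2))
  have hne : ∀ s ∈ Icc 0 δ, ∀ t ∈ Icc 0 δ, s ≠ t → γ s ≠ γ t := fun s hs t ht =>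
    h.ne ⟨hs.1, hs.2.trans hδ⟩ ⟨ht.1, ht.2.trans hδ⟩
  have hhalf : γ (z / 2) ≠ γ z := hne _ ⟨by linarith, by linarith⟩ _ ⟨hz.le, hzδ.le⟩ (by linarith)
  have hγδ : γ δ ≠ γ z := hne _ ⟨by linarith, le_rfl⟩ _ ⟨hz.le, hzδ.le⟩ hzδ.ne'
  have hjoin : JoinedIn (W \ {γ 0}) (γ (z / 2)) (γ δ) :=
    (h.isArc (half_pos hz).le (by linarith) hδ).joinedIn.mono
      (h.image_Icc_subset_sdiff (half_pos hz) le_rfl hδ hγW)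
  have hmem : γ (z / 2) ∈ W \ {γ 0, γ z} :=
    ⟨hjoin.source_mem.1, fun e => e.elim hjoin.source_mem.2 hhalf⟩
  by_contra hnot
  obtain ⟨q, hqT, hqC, hqW⟩ := exists_mem_closure_pathComponentIn_sdiff
    (hT.isPreconnected_diff_singleton (γ z)) (hW.sdiff (toFinite _).isClosed)
    ⟨h.mem (z / 2) ⟨half_pos hz, by linarith⟩, hhalf⟩ hmem
    ⟨h.mem δ ⟨hz.trans hzδ, hδ⟩, hγδ⟩ hnot
  have hCr : ¬ C ⊆ closedBall (γ 0) r := fun hCr => hqW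
    ⟨hrW (closure_minimal hCr isClosed_closedBall hqC),
      fun e => e.elim (fun e => h.notMem (e ▸ hqT.1)) hqT.2⟩
  obtain ⟨w', hw'C, hw'⟩ := not_subset.1 hCr
  obtain ⟨w, hwC, hw⟩ :=
    (isPathConnected_pathComponentIn hmem).isConnected.isPreconnected.intermediate_value
      (mem_pathComponentIn_self hmem) hw'C (f := fun x => dist x (γ 0)) (by fun_prop)
      ⟨hzr, (not_le.1 hw').le⟩
  refine hnot (JoinedIn.trans hwC (hsphere w hw (((JoinedIn.symm hwC).mono ?_).trans hjoin)))
  exact sdiff_subset_sdiff_right (singleton_subset_iff.2 (Or.inl rfl))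

lemma eventually_joinedIn_sdiff_pair [ProperSpace X] [LocallyPathConnectedSpace X]
    (h : IsApproach T γ L) (hT : CyclicallyConnected T) (hW : IsOpen W) (hδ₀ : 0 < δ) (hδ : δ ≤ L)
    (hγW : γ '' Icc 0 δ ⊆ W) :
    ∀ᶠ z in 𝓝[>] 0, JoinedIn (W \ {γ 0, γ z}) (γ (z / 2)) (γ δ) := by
  obtain ⟨r, hr, hrW⟩ := nhds_basis_closedBall.mem_iff.1
    (hW.mem_nhds (hγW ⟨0, left_mem_Icc.2 hδ₀.le, rfl⟩))
  have hsphere := h.continuous.continuousAt.eventually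
    (eventually_forall_joinedIn_sdiff_pair (p := γ 0) (y := γ δ) (isCompact_sphere (γ 0) r) hW
      (sphere_subset_closedBall.trans hrW) (by simp [hr.ne]))
  have hhalf : Tendsto (fun z : ℝ => γ (z / 2)) (𝓝 0) (𝓝 (γ 0)) := by
    simpa using (show Continuous fun z : ℝ => γ (z / 2) from
      h.continuous.comp (by fun_prop)).tendsto 0
  filter_upwards [nhdsWithin_le_nhds hsphere,
    nhdsWithin_le_nhds (hhalf.eventually (closedBall_mem_nhds _ hr)), Ioo_mem_nhdsGT hδ₀]
    with z hz hzr hzδ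
  exact h.joinedIn_sdiff_pair_of_sphere hT hW hrW hzδ.1 hzr hzδ.2 hδ hγW hz

end IsApproach

end Approach

section Chain

variable {X : Type} [MetricSpace X] {T W : Set X} {γ : ℝ → X} {L a b c r z δ : ℝ}

lemma exists_cyclicallyConnected_image_Icc_subset {I : Set ℝ} (hI : IsOpen I) (hγ : InjOn γ I)
    (hab : a ≤ b) (habI : Icc a b ⊆ I)
    (h : ∀ z ∈ Icc a b, ∃ J ⊆ W, IsCompact J ∧ CyclicallyConnected J ∧ γ ⁻¹' J ∈ 𝓝 z) :
    ∃ K ⊆ W, IsCompact K ∧ CyclicallyConnected K ∧ γ '' Icc a b ⊆ K := by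
  let Linked (x y : ℝ) : Prop :=
    ∃ K ⊆ W, IsCompact K ∧ CyclicallyConnected K ∧ ∀ t ∈ uIcc x y, γ ⁻¹' K ∈ 𝓝 t
  have hnear : ∀ x ∈ Icc a b, ∀ᶠ y in 𝓝[Icc a b] x, Linked x y := by
    intro x hx
    obtain ⟨J, hJW, hJ, hJc, hJx⟩ := h x hx
    have huIcc : Tendsto (fun y => uIcc x y) (𝓝 x) (𝓝 x).smallSets :=
      tendsto_const_nhds.uIcc tendsto_id
    have hlinked := tendsto_smallSets_iff.1 huIcc _ (eventually_mem_nhds_iff.2 hJx)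
    filter_upwards [nhdsWithin_le_nhds hlinked] with y hy
    exact ⟨J, hJW, hJ, hJc, hy⟩
  have htrans : ∀ x y z, x ∈ Icc a b → y ∈ Icc a b → z ∈ Icc a b → Linked x y → Linked y z →
      Linked x z := by
    rintro x y z - hy - ⟨K₁, hKW₁, hK₁, hKc₁, hxy⟩ ⟨K₂, hKW₂, hK₂, hKc₂, hyz⟩
    have hy₁ := hxy y right_mem_uIcc
    have hy₂ := hyz y left_mem_uIcc
    obtain ⟨s, ⟨⟨hs₁, hs₂⟩, hsI⟩, hsy⟩ := Filter.nonempty_of_mem (inter_mem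
      (mem_nhdsWithin_of_mem_nhds (inter_mem (inter_mem hy₁ hy₂) (hI.mem_nhds (habI hy))))
      (self_mem_nhdsWithin (s := {y}ᶜ)))
    have hne : γ s ≠ γ y := fun e => hsy (hγ hsI (habI hy) e)
    refine ⟨K₁ ∪ K₂, union_subset hKW₁ hKW₂, hK₁.union hK₂, hKc₁.union hKc₂ hne ⟨hs₁, hs₂⟩
      ⟨(mem_of_mem_nhds hy₁ : y ∈ γ ⁻¹' K₁), (mem_of_mem_nhds hy₂ : y ∈ γ ⁻¹' K₂)⟩, fun t ht => ?_⟩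
    rcases uIcc_subset_uIcc_union_uIcc (b := y) ht with ht | ht
    · exact mem_of_superset (hxy t ht) (preimage_mono subset_union_left)
    · exact mem_of_superset (hyz t ht) (preimage_mono subset_union_right)
  obtain ⟨K, hKW, hK, hKc, hKab⟩ := isPreconnected_Icc.induction₂ Linked hnear htrans
    (fun x y _ _ ⟨K, hKW, hK, hKc, hxy⟩ => ⟨K, hKW, hK, hKc, uIcc_comm x y ▸ hxy⟩)
    (left_mem_Icc.2 hab) (right_mem_Icc.2 hab)
  exact ⟨K, hKW, hK, hKc, image_subset_iff.2 fun t ht =>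
    mem_of_mem_nhds (hKab t (Icc_subset_uIcc ht))⟩

/-- The initial piece `γ '' Ioc 0 c` of a curve is covered from within the ball of radius `r` about
`γ 0`: each of its compact subarcs ending at `γ c` lies in a compact cyclicly connected subset of
the ball that avoids the centre. -/
def IsCyclicallyCovered (γ : ℝ → X) (r c : ℝ) : Prop :=
  ∀ a ∈ Ioc 0 c, ∃ K ⊆ ball (γ 0) r \ {γ 0},
    IsCompact K ∧ CyclicallyConnected K ∧ γ '' Icc a c ⊆ K

/-- A sequence of compact cyclicly connected sets converging to `p` in which consecutive sets share
two points and non-consecutive sets are disjoint. -/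
structure IsCyclicChain (K : ℕ → Set X) (p : X) : Prop where
  isCompact : ∀ n, IsCompact (K n)
  cyclic : ∀ n, CyclicallyConnected (K n)
  overlap : ∀ n, (K n ∩ K (n + 1)).Nontrivial
  disjoint : ∀ n m, n + 2 ≤ m → Disjoint (K n) (K m)
  tendsto : Tendsto K atTop (𝓝 p).smallSets

namespace IsApproach

lemma exists_isJordanCurve_of_joinedIn (h : IsApproach T γ L) (hz : 0 < z) (hzδ : z < δ)
    (hδ : δ ≤ L) (hγW : γ '' Icc 0 δ ⊆ W)
    (hbypass : JoinedIn (W \ {γ 0, γ z}) (γ (z / 2)) (γ δ)) :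
    ∃ J ⊆ W \ {γ 0}, IsJordanCurve J ∧ γ ⁻¹' J ∈ 𝓝 z := by
  have hclosed : ∀ a b, IsClosed (γ '' Icc a b) := fun a b =>
    (isCompact_Icc.image h.continuous).isClosed
  obtain ⟨B, hBW, hB⟩ := exists_isArc_of_joinedIn hbypass
  obtain ⟨B', hB'B, _, hB', hB'z⟩ := hB.symm.exists_subset_inter_eq (hclosed 0 z)
    ⟨γ (z / 2), hB.left_mem, z / 2, ⟨by linarith, by linarith⟩, rfl⟩
  obtain ⟨⟨x, hx, rfl⟩, -⟩ : _ ∈ γ '' Icc 0 z ∩ B' := inter_comm _ B' ▸ hB'z.symm.subset rfl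
  obtain ⟨C, hCB', _, hC, hCz⟩ := hB'.symm.exists_subset_inter_eq (hclosed z δ)
    ⟨γ δ, hB'.left_mem, δ, ⟨by linarith, by linarith⟩, rfl⟩
  obtain ⟨⟨y, hy, rfl⟩, -⟩ : _ ∈ γ '' Icc z δ ∩ C := inter_comm _ C ▸ hCz.symm.subset rfl
  have hCW : C ⊆ W \ {γ 0, γ z} := (hCB'.trans hB'B).trans hBW
  have hx₀ : 0 < x := hx.1.lt_of_ne (by rintro rfl; exact (hCW hC.left_mem).2 (Or.inl rfl))
  have hxz : x < z := hx.2.lt_of_ne (by rintro rfl; exact (hCW hC.left_mem).2 (Or.inr rfl))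
  have hzy : z < y := hy.1.lt_of_ne (by rintro rfl; exact (hCW hC.right_mem).2 (Or.inr rfl))
  have hyL : y ≤ L := hy.2.trans hδ
  have hxy : x < y := hxz.trans hzy
  have hCγ : C ∩ γ '' Icc x y ⊆ {γ x, γ y} := by
    rintro _ ⟨htC, t, ht, rfl⟩
    rcases le_total t z with htz | htz
    · exact Or.inl (hB'z.subset ⟨hCB' htC, t, ⟨hx.1.trans ht.1, htz⟩, rfl⟩)
    · exact Or.inr (hCz.subset ⟨htC, t, ⟨htz, ht.2.trans hy.2⟩, rfl⟩)
  refine ⟨C ∪ γ '' Icc x y, union_subset (hCW.trans ?_)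
    (h.image_Icc_subset_sdiff hx₀ hy.2 hδ hγW),
    hC.isJordanCurve_union (h.isArc hx.1 hxy.le hyL)
      (h.ne ⟨hx.1, by linarith⟩ ⟨by linarith, hyL⟩ hxy.ne) hCγ,
    mem_of_superset (Icc_mem_nhds hxz hzy) fun t ht => Or.inr ⟨t, ht, rfl⟩⟩
  exact sdiff_subset_sdiff_right (singleton_subset_iff.2 (Or.inl rfl))

lemma eventually_isCyclicallyCovered [ProperSpace X] [LocallyPathConnectedSpace X]
    (h : IsApproach T γ L) (hT : CyclicallyConnected T) (hr : 0 < r) :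
    ∀ᶠ c in 𝓝[>] 0, IsCyclicallyCovered γ r c := by
  obtain ⟨ρ, hρ, hρr⟩ := nhds_basis_closedBall.mem_iff.1
    (h.continuous.continuousAt.preimage_mem_nhds (ball_mem_nhds (γ 0) hr))
  set δ := min ρ L
  have hδ₀ : 0 < δ := lt_min hρ h.pos
  have hδ : δ ≤ L := min_le_right ρ L
  have hγr : γ '' Icc 0 δ ⊆ ball (γ 0) r := image_subset_iff.2 fun t ht => hρr <| by
    rw [mem_closedBall, Real.dist_eq, sub_zero, abs_of_nonneg ht.1]
    exact ht.2.trans (min_le_left ρ L)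
  obtain ⟨ε, hε, hbypass⟩ := mem_nhdsGT_iff_exists_Ioo_subset.1
    (inter_mem (h.eventually_joinedIn_sdiff_pair hT isOpen_ball hδ₀ hδ hγr) (Ioo_mem_nhdsGT hδ₀))
  filter_upwards [Ioo_mem_nhdsGT hε, Ioo_mem_nhdsGT h.pos] with c hcε hcL a ha
  refine exists_cyclicallyConnected_image_Icc_subset isOpen_Ioo (h.injOn.mono Ioo_subset_Icc_self)
    ha.2 (Icc_subset_Ioo ha.1 hcL.2) fun z hz => ?_
  obtain ⟨hj, hz₀, hzδ⟩ := hbypass ⟨ha.1.trans_le hz.1, hz.2.trans_lt hcε.2⟩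
  obtain ⟨J, hJ, hJc, hJz⟩ := h.exists_isJordanCurve_of_joinedIn hz₀ hzδ hδ hγr hj
  exact ⟨J, hJ, hJc.isCompact, hJc.cyclicallyConnected, hJz⟩

lemma exists_next_link [ProperSpace X] [LocallyPathConnectedSpace X] (h : IsApproach T γ L)
    (hT : CyclicallyConnected T) {K : Set X} (hK : IsClosed K) (hpK : γ 0 ∉ K) (hr : 0 < r)
    (hc : 0 < c) (hcov : IsCyclicallyCovered γ r c) :
    ∃ r' c' K', 0 < r' ∧ r' ≤ 1 / 2 * r ∧ Disjoint K (ball (γ 0) r') ∧ 0 < c' ∧ c' ≤ c ∧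
      IsCyclicallyCovered γ r' c' ∧ K' ⊆ ball (γ 0) r \ {γ 0} ∧ IsCompact K' ∧
      CyclicallyConnected K' ∧ γ '' Icc (c' / 2) c ⊆ K' := by
  obtain ⟨ρ, hρ, hρK⟩ := nhds_basis_ball.mem_iff.1 (hK.isOpen_compl.mem_nhds hpK)
  have hr' : 0 < min (1 / 2 * r) ρ := lt_min (by positivity) hρ
  obtain ⟨c', hcov', hc'⟩ :=
    ((h.eventually_isCyclicallyCovered hT hr').and (Ioc_mem_nhdsGT hc)).exists
  obtain ⟨K', hK'⟩ := hcov (c' / 2) ⟨half_pos hc'.1, (half_le_self hc'.1.le).trans hc'.2⟩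
  exact ⟨_, c', K', hr', min_le_left _ _,
    disjoint_left.2 fun x hx hxr => hρK (ball_subset_ball (min_le_right _ _) hxr) hx,
    hc'.1, hc'.2, hcov', hK'⟩

lemma exists_link_seq [ProperSpace X] [LocallyPathConnectedSpace X] (h : IsApproach T γ L)
    (hT : CyclicallyConnected T) :
    ∃ (r c : ℕ → ℝ) (K : ℕ → Set X), (∀ n, 0 < r n) ∧ (∀ n, r (n + 1) ≤ 1 / 2 * r n) ∧
      (∀ n, c n ∈ Ioc 0 L) ∧ Antitone c ∧ (∀ n, IsCompact (K n)) ∧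
      (∀ n, CyclicallyConnected (K n)) ∧ (∀ n, γ '' Icc (c (n + 1) / 2) (c n) ⊆ K n) ∧
      (∀ n, K n ⊆ ball (γ 0) (r n)) ∧ ∀ n, Disjoint (K n) (ball (γ 0) (r (n + 2))) := by
  let Stage := {s : ℝ × ℝ × Set X // 0 < s.1 ∧ s.2.1 ∈ Ioc 0 L ∧ IsCyclicallyCovered γ s.1 s.2.1 ∧
    IsClosed s.2.2 ∧ γ 0 ∉ s.2.2}
  let Next (s s' : Stage) : Prop := s'.1.1 ≤ 1 / 2 * s.1.1 ∧ Disjoint s.1.2.2 (ball (γ 0) s'.1.1) ∧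
    s'.1.2.1 ≤ s.1.2.1 ∧ s'.1.2.2 ⊆ ball (γ 0) s.1.1 ∧ IsCompact s'.1.2.2 ∧
    CyclicallyConnected s'.1.2.2 ∧ γ '' Icc (s'.1.2.1 / 2) s.1.2.1 ⊆ s'.1.2.2
  have hnext : ∀ s, ∃ s', Next s s' := by
    rintro ⟨⟨r, c, K⟩, hr, hc, hcov, hK, hpK⟩
    obtain ⟨r', c', K', hr', hrr', hdisj, hc', hcc', hcov', hK'r, hK', hKc', hγ⟩ :=
      h.exists_next_link hT hK hpK hr hc.1 hcov
    exact ⟨⟨⟨r', c', K'⟩, hr', ⟨hc', hcc'.trans hc.2⟩, hcov', hK'.isClosed,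
      fun hp => (hK'r hp).2 rfl⟩, hrr', hdisj, hcc', hK'r.trans sdiff_subset, hK', hKc', hγ⟩
  obtain ⟨c, hcov, hc⟩ :=
    ((h.eventually_isCyclicallyCovered hT one_pos).and (Ioc_mem_nhdsGT h.pos)).exists
  choose next hnext using hnext
  let s₀ : Stage := ⟨⟨1, c, ∅⟩, one_pos, hc, hcov, isClosed_empty, notMem_empty _⟩
  obtain ⟨s, hs⟩ : ∃ s : ℕ → Stage, ∀ n, Next (s n) (s (n + 1)) :=
    ⟨Nat.rec s₀ fun _ => next, fun _ => hnext _⟩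
  choose hr hdisj hcc hKr hK hKc hγ using hs
  exact ⟨fun n => (s n).1.1, fun n => (s n).1.2.1, fun n => (s (n + 1)).1.2.2,
    fun n => (s n).2.1, hr, fun n => (s n).2.2.1, antitone_nat_of_succ_le hcc, hK, hKc, hγ, hKr,
    fun n => hdisj (n + 1)⟩

lemma exists_isCyclicChain [ProperSpace X] [LocallyPathConnectedSpace X] (h : IsApproach T γ L)
    (hT : CyclicallyConnected T) : ∃ K, IsCyclicChain K (γ 0) ∧ (K 0 ∩ T).Nontrivial := by
  obtain ⟨r, c, K, hr, hrr, hc, hcc, hK, hKc, hγK, hKr, hdisj⟩ := h.exists_link_seq hT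
  have hranti : Antitone r := antitone_nat_of_succ_le fun n => by linarith [hrr n, hr n]
  have hrlim : Tendsto r atTop (𝓝 0) := by
    refine squeeze_zero (fun n => (hr n).le) (fun n => le_geom (by norm_num) n fun k _ => hrr k) ?_
    simpa using (tendsto_pow_atTop_nhds_zero_of_lt_one (r := (1 / 2 : ℝ)) (by norm_num)
      (by norm_num)).mul_const (r 0)
  have hne : ∀ n, γ (c (n + 1) / 2) ≠ γ (c (n + 1)) := fun n => by
    have := hc (n + 1)
    exact h.ne ⟨by linarith [this.1], by linarith [this.1, this.2]⟩ ⟨this.1.le, this.2⟩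
      (by linarith [this.1])
  have hleft : ∀ n, γ (c (n + 1) / 2) ∈ K n ∧ γ (c (n + 1)) ∈ K n := fun n => by
    have := (hc (n + 1)).1
    have := hcc n.le_succ
    exact ⟨hγK n ⟨_, ⟨le_rfl, by linarith⟩, rfl⟩, hγK n ⟨_, ⟨by linarith, this⟩, rfl⟩⟩
  have hright : ∀ n, γ (c (n + 1) / 2) ∈ K (n + 1) ∧ γ (c (n + 1)) ∈ K (n + 1) := fun n => by
    have := (hc (n + 1)).1
    have := hcc (n + 1).le_succ
    exact ⟨hγK (n + 1) ⟨_, ⟨by linarith, by linarith⟩, rfl⟩,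
      hγK (n + 1) ⟨_, ⟨by linarith, le_rfl⟩, rfl⟩⟩
  have hT : ∀ t, 0 < t → t ≤ c 1 → γ t ∈ T := fun t ht htc => h.mem t ⟨ht, htc.trans (hc 1).2⟩
  refine ⟨K, ⟨hK, hKc,
    fun n => ⟨_, ⟨(hleft n).1, (hright n).1⟩, _, ⟨(hleft n).2, (hright n).2⟩, hne n⟩,
    fun n m hnm => (hdisj n).mono_right ((hKr m).trans (ball_subset_ball (hranti hnm))), ?_⟩,
    _, ⟨(hleft 0).1, hT _ (half_pos (hc 1).1) (half_le_self (hc 1).1.le)⟩, _,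
    ⟨(hleft 0).2, hT _ (hc 1).1 le_rfl⟩, hne 0⟩
  exact nhds_basis_ball.smallSets.tendsto_right_iff.2 fun ε hε =>
    (hrlim.eventually_lt_const hε).mono fun n hn => (hKr n).trans (ball_subset_ball hn.le)

end IsApproach

end Chain

section Closed

variable {X : Type} [MetricSpace X] {p u v : X}

lemma exists_continuousOn_Ici_of_joinedIn_succ {Y : Type*} [TopologicalSpace Y] {P : ℕ → Set Y}
    {u : ℕ → Y} (hP : ∀ n, JoinedIn (P n) (u n) (u (n + 1))) :
    ∃ f : ℝ → Y, ContinuousOn f (Ici 0) ∧ f 0 = u 0 ∧ ∀ t, f t ∈ P ⌊t⌋₊ := by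
  choose σ hσ using hP
  have hσ' : ∀ n t, (σ n).extend t ∈ P n := fun n t => hσ n _
  let f : ℝ → Y := fun t => (σ ⌊t⌋₊).extend (t - ⌊t⌋₊)
  have hf : ∀ n : ℕ, EqOn f (fun t => (σ n).extend (t - n)) (Icc n (n + 1)) := by
    intro n t ht
    rcases ht.2.eq_or_lt with rfl | hlt
    · have hfloor : ⌊(n : ℝ) + 1⌋₊ = n + 1 := mod_cast Nat.floor_natCast (R := ℝ) (n + 1)
      simp [f, hfloor]
    · obtain rfl : ⌊t⌋₊ = n := (Nat.floor_eq_iff (n.cast_nonneg.trans ht.1)).2 ⟨ht.1, hlt⟩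
      rfl
  have hfin : LocallyFinite fun n : ℕ => Icc (n : ℝ) (n + 1) := fun t =>
    ⟨Iio (t + 1), Iio_mem_nhds (lt_add_one t), (finite_lt_nat ⌈t + 1⌉₊).subset fun n ⟨s, hs, hst⟩ =>
      Nat.lt_ceil.2 (hs.1.trans_lt hst)⟩
  have hcont : ContinuousOn f (⋃ n : ℕ, Icc (n : ℝ) (n + 1)) :=
    hfin.continuousOn_iUnion (fun _ => isClosed_Icc) fun n =>
      ((σ n).continuous_extend.comp (continuous_id.sub continuous_const)).continuousOn.congr (hf n)
  have hcover : Ici 0 ⊆ ⋃ n : ℕ, Icc (n : ℝ) (n + 1) := fun t ht =>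
    mem_iUnion.2 ⟨⌊t⌋₊, Nat.floor_le ht, (Nat.lt_floor_add_one t).le⟩
  exact ⟨f, hcont.mono hcover, by simp [f], fun t => hσ' _ _⟩

lemma joinedIn_insert_of_tendsto {Y : Type*} [TopologicalSpace Y] {S : Set Y} {f : ℝ → Y} {p : Y}
    (hf : ContinuousOn f (Ici 0)) (hlim : Tendsto f atTop (𝓝 p)) (hfS : ∀ t, 0 ≤ t → f t ∈ S) :
    JoinedIn (insert p S) (f 0) p := by
  have hinv : MapsTo (fun s : ℝ => s⁻¹ - 1) (Ioc 0 1) (Ici 0) := fun s hs =>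
    sub_nonneg.2 ((one_le_inv₀ hs.1).2 hs.2)
  have hIoc : Icc (0 : ℝ) 1 \ {0} = Ioc 0 1 := Icc_sdiff_left
  refine (JoinedIn.ofLine (f := Function.update (fun s => f (s⁻¹ - 1)) 0 p) ?_
    (Function.update_self ..) (by simp) ?_).symm
  · rw [continuousOn_update_iff, hIoc]
    refine ⟨hf.comp ((continuousOn_inv₀.mono fun s hs => hs.1.ne').sub continuousOn_const) hinv,
      fun _ => ?_⟩
    exact (hlim.comp (tendsto_atTop_add_const_right _ (-1) tendsto_inv_nhdsGT_zero)).mono_left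
      (nhdsWithin_mono _ Ioc_subset_Ioi_self)
  · rintro _ ⟨s, hs, rfl⟩
    rcases eq_or_ne s 0 with rfl | hs₀
    · exact Or.inl (Function.update_self ..)
    · rw [Function.update_of_ne hs₀]
      exact Or.inr (hfS _ (hinv ⟨hs.1.lt_of_ne' hs₀, hs.2⟩))

lemma joinedIn_insert_iUnion_of_tendsto_smallSets {Y : Type*} [TopologicalSpace Y]
    {P : ℕ → Set Y} {u : ℕ → Y} {p : Y} (hP : ∀ n, JoinedIn (P n) (u n) (u (n + 1)))
    (hlim : Tendsto P atTop (𝓝 p).smallSets) : JoinedIn (insert p (⋃ n, P n)) (u 0) p := by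
  obtain ⟨f, hf, hf₀, hfP⟩ := exists_continuousOn_Ici_of_joinedIn_succ hP
  refine hf₀ ▸ joinedIn_insert_of_tendsto hf (tendsto_def.2 fun U hU => ?_)
    fun t _ => mem_iUnion.2 ⟨_, hfP t⟩
  filter_upwards [tendsto_nat_floor_atTop.eventually (tendsto_smallSets_iff.1 hlim U hU)] with t ht
  exact ht (hfP t)

/-- Two sequences of arcs running through a chain `K`, the `n`-th arc of each inside `K n` from its
entry point to the first point of `K (n + 1)`, with disjoint arcs in the same link. -/
structure IsStrandPair (K : ℕ → Set X) (u v : ℕ → X) (P Q : ℕ → Set X) : Prop where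
  left_subset : ∀ n, P n ⊆ K n
  right_subset : ∀ n, Q n ⊆ K n
  left_isArc : ∀ n, IsArc (P n) (u n) (u (n + 1))
  right_isArc : ∀ n, IsArc (Q n) (v n) (v (n + 1))
  disjoint_self : ∀ n, Disjoint (P n) (Q n)
  left_inter : ∀ n, P n ∩ K (n + 1) = {u (n + 1)}
  right_inter : ∀ n, Q n ∩ K (n + 1) = {v (n + 1)}

variable {K P Q : ℕ → Set X} {a b : ℕ → X}

namespace IsStrandPair

protected lemma symm (h : IsStrandPair K a b P Q) : IsStrandPair K b a Q P :=
  ⟨h.right_subset, h.left_subset, h.right_isArc, h.left_isArc, fun n => (h.disjoint_self n).symm,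
    h.right_inter, h.left_inter⟩

lemma disjoint_of_le (h : IsStrandPair K a b P Q) (hK : IsCyclicChain K p) {n m : ℕ}
    (hnm : n ≤ m) : Disjoint (P n) (Q m) := by
  obtain rfl | rfl | hnm : m = n ∨ m = n + 1 ∨ n + 2 ≤ m := by lia
  · exact h.disjoint_self m
  · refine disjoint_left.2 fun x hxP hxQ => disjoint_left.1 (h.disjoint_self (n + 1)) ?_ hxQ
    obtain rfl : x = a (n + 1) := (h.left_inter n).subset ⟨hxP, h.right_subset _ hxQ⟩
    exact (h.left_isArc (n + 1)).left_mem
  · exact (hK.disjoint n m hnm).mono (h.left_subset n) (h.right_subset m)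

lemma disjoint (h : IsStrandPair K a b P Q) (hK : IsCyclicChain K p) (n m : ℕ) :
    Disjoint (P n) (Q m) :=
  (le_total n m).elim (h.disjoint_of_le hK) fun hmn => (h.symm.disjoint_of_le hK hmn).symm

lemma exists_isArc_left (h : IsStrandPair K a b P Q) (hK : IsCyclicChain K p) :
    ∃ A ⊆ insert p (⋃ n, P n), IsArc A (a 0) p :=
  exists_isArc_of_joinedIn <| joinedIn_insert_iUnion_of_tendsto_smallSets
    (fun n => (h.left_isArc n).joinedIn) <| tendsto_smallSets_iff.2 fun U hU =>
      (tendsto_smallSets_iff.1 hK.tendsto U hU).mono fun n hn => (h.left_subset n).trans hn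

end IsStrandPair

namespace IsCyclicChain

lemma exists_isStrandPair (hK : IsCyclicChain K p) (huv : u ≠ v) (hu : u ∈ K 0) (hv : v ∈ K 0) :
    ∃ a b P Q, IsStrandPair K a b P Q ∧ a 0 = u ∧ b 0 = v := by
  let Entry (n : ℕ) := {s : X × X // s.1 ∈ K n ∧ s.2 ∈ K n ∧ s.1 ≠ s.2}
  have hnext : ∀ n (s : Entry n), ∃ s' : Entry (n + 1), ∃ P ⊆ K n, ∃ Q ⊆ K n,
      IsArc P s.1.1 s'.1.1 ∧ IsArc Q s.1.2 s'.1.2 ∧ Disjoint P Q ∧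
      P ∩ K (n + 1) = {s'.1.1} ∧ Q ∩ K (n + 1) = {s'.1.2} := by
    rintro n ⟨⟨u, v⟩, hu, hv, huv⟩
    obtain ⟨d, hd, e, he, hde⟩ := hK.overlap n
    obtain ⟨P, hPK, Q, hQK, x, y, hP, hQ, hPQ, hPx, hQy⟩ := (hK.cyclic n).exists_disjoint_arcs
      (hK.isCompact (n + 1)).isClosed hde hd he hu hv huv
    have hx := hPx.symm.subset rfl
    have hy := hQy.symm.subset rfl
    exact ⟨⟨(x, y), hx.2, hy.2, hPQ.ne_of_mem hx.1 hy.1⟩, P, hPK, Q, hQK, hP, hQ, hPQ, hPx, hQy⟩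
  choose next P hPK Q hQK hP hQ hPQ hPx hQy using hnext
  let s : ∀ n, Entry n := Nat.rec ⟨(u, v), hu, hv, huv⟩ next
  exact ⟨fun n => (s n).1.1, fun n => (s n).1.2, fun n => P n (s n), fun n => Q n (s n),
    ⟨fun n => hPK n _, fun n => hQK n _, fun n => hP n _, fun n => hQ n _, fun n => hPQ n _,
      fun n => hPx n _, fun n => hQy n _⟩, rfl, rfl⟩

lemma exists_arcs_to_limit (hK : IsCyclicChain K p) (huv : u ≠ v) (hu : u ∈ K 0) (hv : v ∈ K 0) :
    ∃ A B, IsArc A u p ∧ IsArc B v p ∧ A ∩ B ⊆ {p} := by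
  obtain ⟨a, b, P, Q, h, rfl, rfl⟩ := hK.exists_isStrandPair huv hu hv
  obtain ⟨A, hAP, hA⟩ := h.exists_isArc_left hK
  obtain ⟨B, hBQ, hB⟩ := h.symm.exists_isArc_left hK
  refine ⟨A, B, hA, hB, fun x ⟨hxA, hxB⟩ => ?_⟩
  rcases hAP hxA with hx | hxP
  · exact hx
  rcases hBQ hxB with hx | hxQ
  · exact hx
  obtain ⟨n, hn⟩ := mem_iUnion.1 hxP
  obtain ⟨m, hm⟩ := mem_iUnion.1 hxQ
  exact absurd hm (disjoint_left.1 (h.disjoint hK n m) hn)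

end IsCyclicChain

protected lemma MaximalCyclic.isClosed [ProperSpace X] [LocallyPathConnectedSpace X] {T : Set X}
    (hT : MaximalCyclic T) : IsClosed T := by
  refine isClosed_of_closure_subset fun p hp => by_contra fun hpT => ?_
  obtain ⟨γ, L, h, rfl⟩ := hT.exists_isApproach hp hpT
  obtain ⟨K, hK, u, hu, v, hv, huv⟩ := h.exists_isCyclicChain hT.2.1
  obtain ⟨A, B, hA, hB, hAB⟩ := hK.exists_arcs_to_limit huv hu.1 hv.1
  exact hpT (hT.subset_of_isArc (hA.trans hB.symm hAB) hu.2 hv.2 (Or.inl hA.right_mem))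

end Closed

section Retraction

lemma exists_choice_closure_inter {Y : Type*} [TopologicalSpace Y] {T : Set Y} (hT : T.Nonempty) :
    ∃ f : Set Y → Y, (∀ C, f C ∈ T) ∧ ∀ C, (closure C ∩ T).Nonempty → f C ∈ closure C := by
  obtain ⟨t₀, ht₀⟩ := hT
  have h : ∀ C : Set Y, ∃ z ∈ T, (closure C ∩ T).Nonempty → z ∈ closure C := fun C => by
    by_cases hC : (closure C ∩ T).Nonempty
    · exact ⟨hC.some, hC.some_mem.2, fun _ => hC.some_mem.1⟩
    · exact ⟨t₀, ht₀, fun h => absurd h hC⟩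
  choose f hfT hf using h
  exact ⟨f, hfT, hf⟩

variable {X : Type} [MetricSpace X] [LocallyPathConnectedSpace X] {T : Set X} {a b y : X}

namespace MaximalCyclic

lemma eq_of_mem_closure_pathComponentIn (hT : MaximalCyclic T)
    (ha : a ∈ closure (pathComponentIn Tᶜ y)) (hb : b ∈ closure (pathComponentIn Tᶜ y))
    (haT : a ∈ T) (hbT : b ∈ T) : a = b := by
  by_contra hab
  have hy : y ∈ Tᶜ := pathComponentIn_nonempty_iff.1 (closure_nonempty_iff.1 ⟨a, ha⟩)
  obtain ⟨U, V, hU, hV, haU, hbV, hUV⟩ := t2_separation hab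
  obtain ⟨N, hN, hNc, hNU⟩ := exists_isPathConnected_nhds_subset (hU.mem_nhds haU)
  obtain ⟨M, hM, hMc, hMV⟩ := exists_isPathConnected_nhds_subset (hV.mem_nhds hbV)
  have hNCM : IsPathConnected (N ∪ pathComponentIn Tᶜ y ∪ M) := by
    refine (hNc.union (isPathConnected_pathComponentIn hy)
      (mem_closure_iff_nhds.1 ha N hN)).union hMc ?_
    obtain ⟨z, hzM, hzC⟩ := mem_closure_iff_nhds.1 hb M hM
    exact ⟨z, Or.inr hzC, hzM⟩
  obtain ⟨A, hA, hab⟩ := exists_isArc_of_joinedIn (hNCM.joinedIn a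
    (Or.inl (Or.inl (mem_of_mem_nhds hN))) b (Or.inr (mem_of_mem_nhds hM)))
  have hAUV : A ⊆ U ∪ V := fun z hz => by
    rcases hA hz with (h | h) | h
    · exact Or.inl (hNU h)
    · exact absurd (hT.subset_of_isArc hab haT hbT hz) (pathComponentIn_subset h)
    · exact Or.inr (hMV h)
  obtain ⟨z, -, hzU, hzV⟩ := hab.isPathConnected.isConnected.isPreconnected U V hU hV hAUV
    ⟨a, hab.left_mem, haU⟩ ⟨b, hab.right_mem, hbV⟩
  exact disjoint_left.1 hUV hzU hzV

lemma exists_retraction (hT : MaximalCyclic T) (hTc : IsClosed T) :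
    ∃ r : X → X, Continuous r ∧ (∀ x, r x ∈ T) ∧ EqOn r id T := by
  classical
  obtain ⟨foot, hfootT, hfoot⟩ :=
    exists_choice_closure_inter (not_subsingleton_iff.1 hT.1).nonempty
  let r : X → X := fun y => if y ∈ T then y else foot (pathComponentIn Tᶜ y)
  have hrid : ∀ y ∈ T, r y = y := fun y hy => if_pos hy
  have hrfoot : ∀ y ∉ T, r y = foot (pathComponentIn Tᶜ y) := fun y hy => if_neg hy
  have hrT : ∀ y, r y ∈ T := fun y => by
    by_cases hy : y ∈ T
    · exact (hrid y hy).symm ▸ hy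
    · exact (hrfoot y hy).symm ▸ hfootT _
  refine ⟨r, continuous_iff_continuousAt.2 fun x => ?_, hrT, hrid⟩
  by_cases hx : x ∈ T
  · rw [ContinuousAt, hrid x hx]
    intro U hU
    obtain ⟨N, hN, hNc, hNU⟩ := exists_isPathConnected_nhds_subset hU
    rw [mem_map]
    filter_upwards [hN] with y hy
    by_cases hyT : y ∈ T
    · exact mem_preimage.2 ((hrid y hyT).symm ▸ hNU hy)
    obtain ⟨w, hwN, hwC, hwT⟩ := exists_mem_closure_pathComponentIn_sdiff
      hNc.isConnected.isPreconnected hTc.isOpen_compl hy hyT (mem_of_mem_nhds hN)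
      fun h => pathComponentIn_subset h hx
    have hwT : w ∈ T := not_notMem.1 hwT
    rw [mem_preimage, hrfoot y hyT, hT.eq_of_mem_closure_pathComponentIn
      (hfoot _ ⟨w, hwC, hwT⟩) hwC (hfootT _) hwT]
    exact hNU hwN
  · refine continuousAt_const.congr (f := fun _ => r x) ?_
    filter_upwards [(hTc.isOpen_compl.pathComponentIn x).mem_nhds (mem_pathComponentIn_self hx)]
      with y hy
    rw [hrfoot x hx, hrfoot y (pathComponentIn_subset hy), pathComponentIn_congr hy]

end MaximalCyclic

end Retraction

section Null

variable {X : Type} [MetricSpace X]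

namespace MaximalCyclic

variable {S T M N : Set X} {x y a b : X} {ε : ℝ}

lemma exists_isArc_subset_union (hT : MaximalCyclic T) (hS : CyclicallyConnected S)
    (hN : IsPathConnected N) (hM : IsPathConnected M) (hx : x ∈ N ∩ T) (hy : y ∈ M ∩ T)
    (ha : a ∈ N ∩ S) (hb : b ∈ M ∩ S) : ∃ A ⊆ T, A ⊆ N ∪ S ∪ M ∧ IsArc A x y := by
  obtain ⟨B, hBS, hB⟩ := hS.exists_isArc ha.2 hb.2
  have hNBM : IsPathConnected (N ∪ B ∪ M) :=
    (hN.union hB.isPathConnected ⟨a, ha.1, hB.left_mem⟩).union hM ⟨b, Or.inr hB.right_mem, hb.1⟩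
  obtain ⟨A, hA, hxy⟩ := exists_isArc_of_joinedIn
    (hNBM.joinedIn x (Or.inl (Or.inl hx.1)) y (Or.inr hy.1))
  exact ⟨A, hT.subset_of_isArc hxy hx.2 hy.2,
    hA.trans (union_subset_union_left _ (union_subset_union_right _ hBS)), hxy⟩

lemma inter_nontrivial_of_dist_le (hT : MaximalCyclic T) (hS : CyclicallyConnected S)
    (hN : IsPathConnected N) (hM : IsPathConnected M) (hNa : N ⊆ ball a ε) (hMb : M ⊆ ball b ε)
    (hab : 4 * ε ≤ dist a b) (hNT : (N ∩ T).Nonempty) (hMT : (M ∩ T).Nonempty)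
    (hNS : (N ∩ S).Nonempty) (hMS : (M ∩ S).Nonempty) : (T ∩ S).Nontrivial := by
  obtain ⟨x, hx⟩ := hNT
  obtain ⟨y, hy⟩ := hMT
  obtain ⟨u, hu⟩ := hNS
  obtain ⟨v, hv⟩ := hMS
  obtain ⟨A, hAT, hA, hxy⟩ := hT.exists_isArc_subset_union hS hN hM hx hy hu hv
  have hxa : dist x a < ε := hNa hx.1
  have hyb : dist y b < ε := hMb hy.1
  have hfar : ∀ s ∈ Icc ε (3 * ε), ∃ z ∈ T ∩ S, dist z a = s := by
    rintro s ⟨hεs, hsε⟩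
    have htri := dist_triangle_left a b y
    obtain ⟨z, hzA, hz : dist z a = s⟩ :=
      hxy.isPathConnected.isConnected.isPreconnected.intermediate_value hxy.left_mem hxy.right_mem
        (f := fun z => dist z a) (by fun_prop) ⟨hxa.le.trans hεs, by linarith⟩
    refine ⟨z, ⟨hAT hzA, ?_⟩, hz⟩
    rcases hA hzA with (hzN | hzS) | hzM
    · linarith [mem_ball.1 (hNa hzN)]
    · exact hzS
    · linarith [mem_ball.1 (hMb hzM), dist_triangle_left a b z]
  have hε : 0 < ε := dist_nonneg.trans_lt hxa
  obtain ⟨z, hz, hza⟩ := hfar ε ⟨le_rfl, by linarith⟩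
  obtain ⟨w, hw, hwa⟩ := hfar (2 * ε) ⟨by linarith, by linarith⟩
  exact ⟨z, hz, w, hw, by rintro rfl; linarith⟩

end MaximalCyclic

lemma exists_seq_tendsto_ne_of_not_subset_nhds [CompactSpace X] {F : Set (Set X)} (hF : F.Infinite)
    (hlarge : ∀ x, ∃ U ∈ 𝓝 x, ∀ T ∈ F, ¬ T ⊆ U) :
    ∃ (T : ℕ → Set X) (x y : ℕ → X) (a b : X), T.Injective ∧
      (∀ n, T n ∈ F ∧ x n ∈ T n ∧ y n ∈ T n) ∧ Tendsto x atTop (𝓝 a) ∧ Tendsto y atTop (𝓝 b) ∧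
      a ≠ b := by
  choose U hU hUF using hlarge
  obtain ⟨δ, hδ, hLeb⟩ := uniformity_basis_dist.lebesgue_number_lemma_nhds
    (isCompact_univ (X := X)) fun x _ => hU x
  obtain ⟨x₀⟩ : Nonempty X := not_isEmpty_iff.1 fun _ => hF (toFinite F)
  have hfar : ∀ T ∈ F, ∃ p : X × X, p.1 ∈ T ∧ p.2 ∈ T ∧ δ ≤ dist p.1 p.2 := by
    intro T hT
    obtain ⟨x, hx, -⟩ := not_subset.1 (hUF x₀ T hT)
    obtain ⟨i, hi⟩ := hLeb x (mem_univ x)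
    obtain ⟨y, hy, hyU⟩ := not_subset.1 (hUF i T hT)
    exact ⟨(x, y), hx, hy, le_of_not_gt fun hlt => hyU (hi hlt)⟩
  choose p hpx hpy hpδ using fun n => hfar _ (hF.natEmbedding F n).2
  obtain ⟨⟨a, b⟩, φ, hφ, hlim⟩ := CompactSpace.tendsto_subseq p
  have hab : δ ≤ dist a b :=
    ge_of_tendsto' ((continuous_dist.tendsto (a, b)).comp hlim) fun n => hpδ (φ n)
  exact ⟨fun n => hF.natEmbedding F (φ n), fun n => (p (φ n)).1, fun n => (p (φ n)).2, a, b,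
    Subtype.val_injective.comp ((hF.natEmbedding F).injective.comp hφ.injective),
    fun n => ⟨(hF.natEmbedding F (φ n)).2, hpx _, hpy _⟩, (continuous_fst.tendsto _).comp hlim,
    (continuous_snd.tendsto _).comp hlim, dist_pos.1 (hδ.trans_le hab)⟩

lemma exists_maximalCyclic_subset_nhds [CompactSpace X] [LocallyPathConnectedSpace X]
    {F : Set (Set X)} (hF : F.Infinite) (hmax : ∀ T ∈ F, MaximalCyclic T) :
    ∃ x : X, ∀ U ∈ 𝓝 x, ∃ T ∈ F, T ⊆ U := by
  by_contra! hlarge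
  obtain ⟨T, x, y, a, b, hinj, hT, hx, hy, hab⟩ :=
    exists_seq_tendsto_ne_of_not_subset_nhds hF hlarge
  have hε : 0 < dist a b / 4 := div_pos (dist_pos.2 hab) four_pos
  obtain ⟨N, hN, hNc, hNa⟩ := exists_isPathConnected_nhds_subset (ball_mem_nhds a hε)
  obtain ⟨M, hM, hMc, hMb⟩ := exists_isPathConnected_nhds_subset (ball_mem_nhds b hε)
  obtain ⟨k, hk⟩ := eventually_atTop.1 ((hx.eventually hN).and (hy.eventually hM))
  have hmeet : ∀ n ≥ k, (N ∩ T n).Nonempty ∧ (M ∩ T n).Nonempty := fun n hn =>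
    ⟨⟨x n, (hk n hn).1, (hT n).2.1⟩, ⟨y n, (hk n hn).2, (hT n).2.2⟩⟩
  have hTk := hmax _ (hT k).1
  have hTk' := hmax _ (hT (k + 1)).1
  exact not_subsingleton_iff.2 (hTk.inter_nontrivial_of_dist_le hTk'.2.1 hNc hMc hNa hMb
    (by linarith) (hmeet k le_rfl).1 (hmeet k le_rfl).2 (hmeet _ k.le_succ).1
    (hmeet _ k.le_succ).2) (hTk.inter_subsingleton hTk' (hinj.ne k.succ_ne_self.symm))

end Null

section Contractible

lemma contractibleSpace_of_retract {Y Z : Type*} [TopologicalSpace Y] [TopologicalSpace Z]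
    [ContractibleSpace Y] (i : C(Z, Y)) (r : C(Y, Z)) (h : r.comp i = ContinuousMap.id Z) :
    ContractibleSpace Z := by
  rw [contractible_iff_id_nullhomotopic, ← h]
  exact ((id_nullhomotopic Y).comp_right r).comp_left i

lemma LocallyContractible.locallyPathConnectedSpace {X : Type} [TopologicalSpace X]
    (h : LocallyContractible X) : LocallyPathConnectedSpace X := by
  refine ⟨fun x => hasBasis_self.2 fun U hU => ?_⟩
  obtain ⟨V, hV, hVU, -, hVc⟩ := h x U hU
  exact ⟨V, hV, isPathConnected_iff_pathConnectedSpace.2 inferInstance, hVU⟩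

end Contractible

theorem not_locallyContractible_of_infinitely_many_noncontractible_maximalCyclic_general
    {X : Type} [MetricSpace X] [CompactSpace X]
    (h : {T : Set X | MaximalCyclic T ∧ ¬ ContractibleSpace ↥T}.Infinite) :
    ¬ LocallyContractible X := by
  intro hX
  have := hX.locallyPathConnectedSpace
  obtain ⟨x, hx⟩ := exists_maximalCyclic_subset_nhds h fun T hT => hT.1
  obtain ⟨V, hV, -, -, hVc⟩ := hX x univ univ_mem
  obtain ⟨T, ⟨hT, hTn⟩, hTV⟩ := hx V hV
  obtain ⟨r, hr, hrT, hrid⟩ := hT.exists_retraction hT.isClosed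
  exact hTn (contractibleSpace_of_retract ⟨inclusion hTV, continuous_inclusion hTV⟩
    ⟨fun v => ⟨r v, hrT v⟩, by fun_prop⟩ (ContinuousMap.ext fun t => Subtype.ext (hrid t.2)))

/-- A Peano space containing infinitely many non-contractible maximal cyclic subsets
is not locally contractible. -/
theorem not_locallyContractible_of_infinitely_many_noncontractible_maximalCyclic
    (X : Type) [MetricSpace X] [CompactSpace X] [ConnectedSpace X] [LocallyConnectedSpace X]
    (h : {T : Set X | MaximalCyclic T ∧ ¬ ContractibleSpace ↥T}.Infinite) :
    ¬ LocallyContractible X :=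
  not_locallyContractible_of_infinitely_many_noncontractible_maximalCyclic_general h
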